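/- If A is a ribbon that is not equitable, then there exists an equitable ribbon R of the same size such that s_R − s_A is Schur-positive and supp(A) is strictly contained in supp(R). -/

import Mathlib

/-- A skew shape `outer / inner`: the boxes of the Young diagram of `outer`
that are not boxes of the Young diagram of `inner`. -/
structure SkewShape where
  outer : YoungDiagram
  inner : YoungDiagram
  inner_le : inner ≤ outer

namespace SkewShape

/-- The set of boxes of a skew shape. -/
def cells (A : SkewShape) : Finset (ℕ × ℕ) := A.outer.cells \ A.inner.cells

/-- The size of a skew shape is its number of boxes. -/
def size (A : SkewShape) : ℕ := A.cells.card

/-- The length of row `i` of a skew shape. -/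
def rowLen (A : SkewShape) (i : ℕ) : ℕ := (A.cells.filter fun c => c.1 = i).card

/-- The length of column `j` of a skew shape. -/
def colLen (A : SkewShape) (j : ℕ) : ℕ := (A.cells.filter fun c => c.2 = j).card

/-- The set of indices of nonempty rows. -/
def rowSet (A : SkewShape) : Finset ℕ := A.cells.image Prod.fst

/-- The set of indices of nonempty columns. -/
def colSet (A : SkewShape) : Finset ℕ := A.cells.image Prod.snd

/-- The number of nonempty rows. -/
def numRows (A : SkewShape) : ℕ := A.rowSet.card

/-- The number of nonempty columns. -/
def numCols (A : SkewShape) : ℕ := A.colSet.card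

/-- `rows A`: the multiset of lengths of the nonempty rows of `A`
(equivalently, that sequence sorted into weakly decreasing order). -/
def rows (A : SkewShape) : Multiset ℕ := A.rowSet.val.map A.rowLen

/-- `cols A`: the multiset of lengths of the nonempty columns of `A`. -/
def cols (A : SkewShape) : Multiset ℕ := A.colSet.val.map A.colLen

/-- A skew shape is disconnected if its boxes can be split into two nonempty
parts such that no box of one part shares a row or a column with a box of the
other part. -/
def Disconnected (A : SkewShape) : Prop :=
  ∃ B C : Finset (ℕ × ℕ), B.Nonempty ∧ C.Nonempty ∧ B ∪ C = A.cells ∧ B ∩ C = ∅ ∧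
    ∀ b ∈ B, ∀ c ∈ C, b.1 ≠ c.1 ∧ b.2 ≠ c.2

/-- A skew shape is connected if it is nonempty and not disconnected. -/
def Connected (A : SkewShape) : Prop := A.cells.Nonempty ∧ ¬ A.Disconnected

/-- A ribbon is a connected skew shape containing no 2×2 block of boxes. -/
def Ribbon (A : SkewShape) : Prop :=
  A.Connected ∧ ∀ i j : ℕ, ¬ ((i, j) ∈ A.cells ∧ (i, j + 1) ∈ A.cells ∧
    (i + 1, j) ∈ A.cells ∧ (i + 1, j + 1) ∈ A.cells)

/-- The lengths of any two nonempty rows differ by at most one. -/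
def RowEquitable (A : SkewShape) : Prop :=
  ∀ i ∈ A.rowSet, ∀ i' ∈ A.rowSet, A.rowLen i ≤ A.rowLen i' + 1

/-- The lengths of any two nonempty columns differ by at most one. -/
def ColEquitable (A : SkewShape) : Prop :=
  ∀ j ∈ A.colSet, ∀ j' ∈ A.colSet, A.colLen j ≤ A.colLen j' + 1

/-- Equitable: both row equitable and column equitable. -/
def Equitable (A : SkewShape) : Prop := A.RowEquitable ∧ A.ColEquitable

/-- A filling of a skew shape is semistandard if its entries are positive
integers, weakly increasing along rows and strictly increasing down columns. -/
def IsSsyt (A : SkewShape) (T : ℕ × ℕ → ℕ) : Prop :=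
  (∀ c ∈ A.cells, 1 ≤ T c) ∧
  (∀ i j j', (i, j) ∈ A.cells → (i, j') ∈ A.cells → j ≤ j' → T (i, j) ≤ T (i, j')) ∧
  (∀ i i' j, (i, j) ∈ A.cells → (i', j) ∈ A.cells → i < i' → T (i, j) < T (i', j))

end SkewShape

/-- `c` comes weakly before `d` in the reverse reading order (right to left
along rows, rows top to bottom). -/
def ReadsBefore (c d : ℕ × ℕ) : Prop := c.1 < d.1 ∨ (c.1 = d.1 ∧ d.2 ≤ c.2)

instance : DecidableRel ReadsBefore := fun c d => by unfold ReadsBefore; infer_instance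

namespace SkewShape

/-- The number of boxes of `A` filled with the entry `k` by the filling `T`. -/
def content (A : SkewShape) (T : ℕ × ℕ → ℕ) (k : ℕ) : ℕ :=
  (A.cells.filter fun c => T c = k).card

/-- A Littlewood--Richardson filling: a semistandard filling such that every
prefix of the reverse reading word contains at least as many `k`'s as
`(k+1)`'s, for every positive `k`. -/
def IsLR (A : SkewShape) (T : ℕ × ℕ → ℕ) : Prop :=
  A.IsSsyt T ∧ ∀ d ∈ A.cells, ∀ k : ℕ,
    (A.cells.filter fun c => T c = k + 2 ∧ ReadsBefore c d).card ≤
    (A.cells.filter fun c => T c = k + 1 ∧ ReadsBefore c d).card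

end SkewShape

/-- The `i`-th largest part (0-indexed) of a multiset of natural numbers,
i.e. the `i`-th entry of the multiset sorted into weakly decreasing order. -/
def part (lam : Multiset ℕ) (i : ℕ) : ℕ := (lam.sort (· ≥ ·)).getD i 0

namespace SkewShape

/-- The support of a skew shape `A`: the set of partitions `lam` (multisets of
positive integers) for which there exists an LR filling of `A` of content `lam`. -/
def supp (A : SkewShape) : Set (Multiset ℕ) :=
  {lam | 0 ∉ lam ∧ ∃ T : ℕ × ℕ → ℕ, A.IsLR T ∧ ∀ i : ℕ, A.content T (i + 1) = part lam i}

/-- The set of LR fillings of `A` of content `lam` (normalized to vanish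
outside the boxes of `A`). -/
def LRset (A : SkewShape) (lam : Multiset ℕ) : Set ((ℕ × ℕ) → ℕ) :=
  {T | A.IsLR T ∧ (∀ c, c ∉ A.cells → T c = 0) ∧ ∀ i : ℕ, A.content T (i + 1) = part lam i}

/-- `s_A − s_B` is Schur-positive: for every partition, the number of LR
fillings of `B` of that content is at most the number for `A`. -/
def SchurPosDiff (A B : SkewShape) : Prop :=
  ∀ lam : Multiset ℕ, (B.LRset lam).ncard ≤ (A.LRset lam).ncard

end SkewShape

/-- The sum of the `k` largest parts of a multiset of natural numbers. -/
def psum (lam : Multiset ℕ) (k : ℕ) : ℕ := ((lam.sort (· ≥ ·)).take k).sum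

/-- Dominance order: `DomLe lam mu` means `lam ⊴ mu`, i.e. for every `k` the
sum of the `k` largest parts of `lam` is at most that of `mu`. -/
def DomLe (lam mu : Multiset ℕ) : Prop := ∀ k : ℕ, psum lam k ≤ psum mu k

/-- The conjugate (transpose) of a partition given as a multiset: its parts
are the numbers `#{x ∈ lam | x ≥ j}` for `j = 1, 2, …`. -/
def conj (lam : Multiset ℕ) : Multiset ℕ :=
  ((Finset.range lam.sum).val.map fun j => Multiset.card (lam.filter fun x => j + 1 ≤ x)).filter
    fun y => y ≠ 0

/-!
Littlewood–Richardson fillings of a ribbon are lattice words with a prescribed descent set. Cutting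
such a word at the ends of the rows turns it into a chain of partitions in which consecutive members
differ by horizontal strips, with a descent between any two consecutive strips; the row lengths are
the sizes of the strips. The number of chains with a given top is the Littlewood–Richardson
coefficient.

If two row lengths differ by at least two, two such entries `p` and `q` that are as close together
as possible enclose a constant list `W`. Replacing `p` and `q` by `p - 1` and `q + 1` can only
increase the coefficients, and it suffices to compare the chains for the rows from `p` to `q`,
subject to the descents across the two ends of this block. A jeu de taquin slide makes the strips
of sizes `q` and `p` adjacent. On such pairs of strips the lowering operator of an `sl₂`-crystal, a
tensor product of one string per row, moves a box from one strip to the other. The descents next to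
`W` say that the two strips have boxes below certain rows, which depend on the chain for `W`.
Deleting the two ends of the extremal string of the tensor product of the lower rows makes the
operator respect these conditions whenever the two rows agree. In general they differ, but the
evacuation of the chain for the palindrome `W` exchanges them, and this reduces to the case of equal
rows.

The support grows strictly: if `k` row lengths exceed `t`, with total excess `e`, then the first `k`
rows of the top shape have at least `k * t + e` boxes, and a key tableau attains this bound for the
new row lengths. Transposition of standard tableaux exchanges the rows and the columns of the
ribbon, and since supports are finite, some ribbon above `A` is maximal and therefore equitable.
-/

namespace RibbonLR

open Finset Set Function

section Injects

variable {α β γ ι : Type*} {s : Set α} {t : Set β} {u : Set γ}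

/-- `s` injects into `t`: the order on cardinalities through which all Schur-positivity statements
below are phrased. -/
def Injects (s : Set α) (t : Set β) : Prop := ∃ F : α → β, MapsTo F s t ∧ InjOn F s

theorem Injects.trans (h : Injects s t) (h' : Injects t u) : Injects s u := by
  obtain ⟨F, hF, hFinj⟩ := h
  obtain ⟨G, hG, hGinj⟩ := h'
  exact ⟨G ∘ F, hG.comp hF, hGinj.comp hFinj hF⟩

theorem Injects.of_leftInvOn {F : α → β} {G : β → α} (hF : MapsTo F s t)
    (hG : LeftInvOn G F s) : Injects s t :=
  ⟨F, hF, hG.injOn⟩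

theorem Injects.of_fibers (f : α → ι) (g : β → ι)
    (h : ∀ i, Injects {x ∈ s | f x = i} {y ∈ t | g y = i}) : Injects s t := by
  choose F hF hFinj using h
  refine ⟨fun x => F (f x) x, fun x hx => (hF _ ⟨hx, rfl⟩).1, fun x hx y hy hxy => ?_⟩
  have hfy : f y = f x := by
    rw [← (hF _ ⟨hx, rfl⟩).2, ← (hF _ ⟨hy, rfl⟩).2]
    exact congrArg g hxy.symm
  exact hFinj _ ⟨hx, rfl⟩ ⟨hy, hfy⟩ (hxy.trans (by simp only [hfy]))

theorem Injects.ncard_le (h : Injects s t) (ht : t.Finite) : s.ncard ≤ t.ncard := by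
  obtain ⟨F, hF, hFinj⟩ := h
  exact ncard_le_ncard_of_injOn F hF hFinj ht

end Injects

section Strips

/-- A partition, given by its row lengths. Monotonicity and finite support are not part of the
type: they follow from the strip conditions where they matter. -/
abbrev Shape := ℕ → ℕ

/-- `m / l` is a horizontal strip (of partitions, if `l` and `m` are the members of a chain of
strips starting at `0`). -/
def IsStrip (l m : Shape) : Prop := ∀ a, l a ≤ m a ∧ m (a + 1) ≤ l a

/-- The largest `m` such that `m / l` and `r / m` are horizontal strips. -/
def stripMax (l r : Shape) : Shape
  | 0 => r 0
  | a + 1 => min (l a) (r (a + 1))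

/-- The smallest `m` such that `m / l` and `r / m` are horizontal strips. -/
def stripMin (l r : Shape) : Shape := fun a => max (l a) (r (a + 1))

/-- The Bender–Knuth involution on the middle shape of a pair of horizontal strips, which is also
the local rule of growth diagrams. -/
def toggle (l m r : Shape) : Shape := fun a => stripMin l r a + stripMax l r a - m a

/-- Some box of `r / m` lies strictly below some box of `m / l`: the standardization of the pair
of strips has a descent at `m`. -/
def Descends (l m r : Shape) : Prop := ∃ i j, i < j ∧ l i < m i ∧ m j < r j

/-- The number of boxes in the first `M` rows of a shape. -/
def size (M : ℕ) (r : Shape) : ℕ := ∑ a ∈ range M, r a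

variable {l m r x x' y' : Shape} {M : ℕ}

theorem IsStrip.eq_zero_of_le (h : IsStrip m r) (hr : ∀ a, M ≤ a → r a = 0) :
    ∀ a, M ≤ a → m a = 0 :=
  fun a ha => Nat.le_zero.1 ((h a).1.trans (hr a ha).le)

theorem stripMin_le (h₁ : IsStrip l m) (h₂ : IsStrip m r) (a : ℕ) : stripMin l r a ≤ m a :=
  max_le (h₁ a).1 (h₂ a).2

theorem le_stripMax (h₁ : IsStrip l m) (h₂ : IsStrip m r) : ∀ a, m a ≤ stripMax l r a
  | 0 => (h₂ 0).1
  | a + 1 => le_min (h₁ a).2 (h₂ (a + 1)).1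

theorem stripMax_le : ∀ a, stripMax l r a ≤ r a
  | 0 => le_rfl
  | _ + 1 => min_le_right _ _

theorem isStrip_of_between (h : ∀ a, stripMin l r a ≤ m a ∧ m a ≤ stripMax l r a) :
    IsStrip l m ∧ IsStrip m r :=
  ⟨fun a => ⟨(le_max_left _ _).trans (h a).1, (h (a + 1)).2.trans (min_le_left _ _)⟩,
    fun a => ⟨(h a).2.trans (stripMax_le a), (le_max_right _ _).trans (h a).1⟩⟩

theorem toggle_add (h₁ : IsStrip l m) (h₂ : IsStrip m r) (a : ℕ) :
    toggle l m r a + m a = stripMin l r a + stripMax l r a := by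
  have := le_stripMax h₁ h₂ a
  unfold toggle
  omega

theorem toggle_between (h₁ : IsStrip l m) (h₂ : IsStrip m r) (a : ℕ) :
    stripMin l r a ≤ toggle l m r a ∧ toggle l m r a ≤ stripMax l r a := by
  have := stripMin_le h₁ h₂ a
  have := le_stripMax h₁ h₂ a
  have := toggle_add h₁ h₂ a
  omega

theorem isStrip_toggle_left (h₁ : IsStrip l m) (h₂ : IsStrip m r) : IsStrip l (toggle l m r) :=
  (isStrip_of_between (toggle_between h₁ h₂)).1

theorem isStrip_toggle_right (h₁ : IsStrip l m) (h₂ : IsStrip m r) : IsStrip (toggle l m r) r :=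
  (isStrip_of_between (toggle_between h₁ h₂)).2

theorem toggle_toggle (h₁ : IsStrip l m) (h₂ : IsStrip m r) : toggle l (toggle l m r) r = m := by
  funext a
  have := toggle_add h₁ h₂ a
  change stripMin l r a + stripMax l r a - toggle l m r a = m a
  omega

theorem size_succ (M : ℕ) (r : Shape) : size (M + 1) r = size M r + r M := sum_range_succ _ _

theorem size_zero_shape (M : ℕ) : size M 0 = 0 := by simp [size]

theorem sum_stripMin_add_stripMax (l r : Shape) (M : ℕ) :
    ∑ a ∈ range (M + 1), (stripMin l r a + stripMax l r a) =
      size (M + 1) r + size M l + max (l M) (r (M + 1)) := by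
  induction M with
  | zero => simp [size, stripMin, stripMax, add_comm]
  | succ M ih =>
    rw [sum_range_succ, ih, size_succ (M + 1), size_succ M l]
    simp only [stripMin, stripMax]
    omega

theorem size_toggle (h₁ : IsStrip l m) (h₂ : IsStrip m r) (hr : ∀ a, M ≤ a → r a = 0) :
    size M (toggle l m r) + size M m = size M l + size M r := by
  have hsum : size M (toggle l m r) + size M m =
      ∑ a ∈ range M, (stripMin l r a + stripMax l r a) := by
    unfold size
    rw [← sum_add_distrib]
    exact sum_congr rfl fun a _ => toggle_add h₁ h₂ a
  rw [hsum]
  cases M with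
  | zero => simp [size]
  | succ M =>
    rw [sum_stripMin_add_stripMax, hr (M + 1) le_rfl, size_succ M l]
    omega

theorem exists_lt_of_size_lt (h : size M l < size M m) : ∃ i, l i < m i := by
  obtain ⟨i, -, hi⟩ := exists_lt_of_sum_lt h
  exact ⟨i, hi⟩

theorem lt_toggle_or_of_lt (hx : IsStrip x x') (hy : IsStrip x' y') {i : ℕ} (h : x' i < y' i) :
    (x i < toggle x x' y' i ∧ y' (i + 1) < toggle x x' y' i) ∨
      ∃ k, i = k + 1 ∧ x k < toggle x x' y' k ∧ x' (k + 1) = x k := by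
  have hadd := toggle_add hx hy i
  cases i with
  | zero =>
    simp only [stripMin, stripMax] at hadd
    omega
  | succ k =>
    have := toggle_between hx hy k
    have := hx k
    simp only [stripMin, stripMax] at *
    by_cases hk : x' (k + 1) < x k
    · omega
    · exact Or.inr ⟨k, rfl, by omega, by omega⟩

theorem lt_or_of_lt_toggle (hx : IsStrip x x') (hy : IsStrip x' y') {i : ℕ}
    (h : x i < toggle x x' y' i) :
    (x' i < y' i ∧ ∀ k, i = k + 1 → x' (k + 1) < x k) ∨
      (x' (i + 1) < y' (i + 1) ∧ toggle x x' y' i ≤ y' (i + 1)) := by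
  have hadd := toggle_add hx hy i
  have := hx i
  cases i with
  | zero =>
    refine Or.imp_left (fun h => ⟨h, fun k hk => absurd hk k.succ_ne_zero.symm⟩) ?_
    simp only [stripMin, stripMax] at *
    omega
  | succ k =>
    simp only [stripMin, stripMax, Nat.add_right_cancel_iff, forall_eq'] at *
    omega

/-- Growth diagrams transport descents. -/
theorem descends_toggle_iff {l' m' r' : Shape} (hl : IsStrip l l') (hm : IsStrip l' m')
    (hr : IsStrip m' r') :
    Descends l' m' r' ↔
      Descends l (toggle l l' m') (toggle (toggle l l' m') m' r') := by
  have hm' := isStrip_toggle_right hl hm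
  constructor
  · rintro ⟨i, j, hij, hi, hj⟩
    rcases lt_toggle_or_of_lt hl hm hi with ⟨hi₁, hi₂⟩ | ⟨i, rfl, hi₁, -⟩ <;>
      rcases lt_toggle_or_of_lt hm' hr hj with ⟨hj₁, -⟩ | ⟨j, rfl, hj₁, hj₂⟩
    · exact ⟨i, j, hij, hi₁, hj₁⟩
    · refine ⟨i, j, lt_of_le_of_ne (Nat.le_of_lt_succ hij) ?_, hi₁, hj₁⟩
      rintro rfl
      omega
    · exact ⟨i, j, by omega, hi₁, hj₁⟩
    · exact ⟨i, j, by omega, hi₁, hj₁⟩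
  · rintro ⟨i, j, hij, hi, hj⟩
    rcases lt_or_of_lt_toggle hl hm hi with ⟨hi₁, -⟩ | ⟨hi₁, hi₂⟩ <;>
      rcases lt_or_of_lt_toggle hm' hr hj with ⟨hj₁, hj₂⟩ | ⟨hj₁, -⟩
    · exact ⟨i, j, hij, hi₁, hj₁⟩
    · exact ⟨i, j + 1, by omega, hi₁, hj₁⟩
    · refine ⟨i + 1, j, lt_of_le_of_ne hij ?_, hi₁, hj₁⟩
      rintro rfl
      exact absurd (hj₂ i rfl) hi₂.not_gt
    · exact ⟨i + 1, j + 1, by omega, hi₁, hj₁⟩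

theorem descends_zero_iff (hm : IsStrip 0 m) (hr : IsStrip m r) : Descends 0 m r ↔ 0 < r 1 := by
  have hm₀ := fun k => (hm k).2
  simp only [Pi.zero_apply, nonpos_iff_eq_zero] at hm₀
  constructor
  · rintro ⟨i, j, hij, -, hj⟩
    obtain rfl : j = 1 := by
      rcases j with _ | _ | k
      · omega
      · rfl
      · have := (hr (k + 1)).2
        rw [hm₀ k] at this
        omega
    omega
  · intro h
    refine ⟨0, 1, one_pos, ?_, by rwa [hm₀ 0]⟩
    exact h.trans_le (hr 0).2

end Strips

section Chains

/-- The largest shape of a chain of strips `0 ⊆ ⋯ ⊆ r`, which is encoded as the list of its nonzero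
members, largest first. -/
def top (l : List Shape) : Shape := l.headD 0

/-- Consecutive members of the chain differ by horizontal strips. -/
def IsStripChain : List Shape → Prop
  | [] => True
  | r :: l => IsStrip (top l) r ∧ IsStripChain l

/-- Jeu de taquin: removes the innermost strip of a chain and rectifies what remains. -/
def slide : List Shape → List Shape
  | [] => []
  | [_] => []
  | r :: m :: l => toggle (top (slide (m :: l))) m r :: slide (m :: l)

/-- The inverse of `slide`: the chain with top `r` whose slide is the given one. -/
def unslide : Shape → List Shape → List Shape
  | r, [] => [r]
  | r, m :: l => r :: unslide (toggle (top l) m r) l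

/-- Every two consecutive strips of the chain form a descent. -/
def AllDescend : List Shape → Prop
  | r :: m :: l => Descends (top l) m r ∧ AllDescend (m :: l)
  | _ => True

theorem top_cons (r : Shape) (l : List Shape) : top (r :: l) = r := rfl

theorem slide_cons (r : Shape) {l : List Shape} (hl : l ≠ []) :
    slide (r :: l) = toggle (top (slide l)) (top l) r :: slide l := by
  obtain ⟨m, l, rfl⟩ := List.exists_cons_of_ne_nil hl
  rfl

theorem length_slide_cons (r : Shape) (l : List Shape) : (slide (r :: l)).length = l.length := by
  induction l generalizing r with
  | nil => rfl
  | cons m l ih => simp [slide, ih]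

theorem slide_cons_ne_nil (r : Shape) {l : List Shape} (hl : l ≠ []) : slide (r :: l) ≠ [] := by
  simp [slide_cons r hl]

theorem tail_slide_cons (r : Shape) (l : List Shape) : (slide (r :: l)).tail = slide l := by
  cases l <;> rfl

theorem length_unslide (r : Shape) (l : List Shape) : (unslide r l).length = l.length + 1 := by
  induction l generalizing r with
  | nil => rfl
  | cons m l ih => simp [unslide, ih]

theorem unslide_ne_nil (r : Shape) (l : List Shape) : unslide r l ≠ [] := by
  cases l <;> exact List.cons_ne_nil _ _

theorem top_unslide (r : Shape) (l : List Shape) : top (unslide r l) = r := by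
  cases l <;> rfl

theorem allDescend_cons (r : Shape) {l : List Shape} (hl : l ≠ []) :
    AllDescend (r :: l) ↔ Descends (top l.tail) (top l) r ∧ AllDescend l := by
  obtain ⟨m, l, rfl⟩ := List.exists_cons_of_ne_nil hl
  rfl

theorem IsStripChain.slide : ∀ {l : List Shape}, IsStripChain l →
    IsStripChain (slide l) ∧ IsStrip (top (RibbonLR.slide l)) (top l)
  | [], _ => ⟨trivial, fun _ => ⟨le_rfl, le_rfl⟩⟩
  | [_], h => ⟨trivial, h.1⟩
  | _ :: _ :: _, ⟨hr, hl⟩ =>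
    have ⟨hchain, hstrip⟩ := hl.slide
    ⟨⟨isStrip_toggle_left hstrip hr, hchain⟩, isStrip_toggle_right hstrip hr⟩

theorem IsStripChain.unslide : ∀ {l : List Shape} {r : Shape}, IsStripChain l → IsStrip (top l) r →
    IsStripChain (unslide r l)
  | [], _, _, hr => ⟨hr, trivial⟩
  | _ :: _, _, ⟨hm, hl⟩, hr => by
    refine ⟨?_, hl.unslide (isStrip_toggle_left hm hr)⟩
    rw [top_unslide]
    exact isStrip_toggle_right hm hr

theorem slide_unslide : ∀ {l : List Shape} {r : Shape}, IsStripChain l → IsStrip (top l) r →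
    slide (unslide r l) = l
  | [], _, _, _ => rfl
  | m :: l, r, ⟨hm, hl⟩, hr => by
    rw [unslide, slide_cons r (unslide_ne_nil _ _), slide_unslide hl (isStrip_toggle_left hm hr),
      top_unslide, toggle_toggle hm hr]

theorem unslide_slide : ∀ {l : List Shape}, IsStripChain l → l ≠ [] → unslide (top l) (slide l) = l
  | [_], _, _ => rfl
  | r :: m :: l, ⟨hr, hl⟩, _ => by
    have ih := unslide_slide hl (List.cons_ne_nil m l)
    rw [slide_cons r (List.cons_ne_nil m l), top_cons, unslide, toggle_toggle hl.slide.2 hr, ih]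

theorem descends_slide_cons_iff {r t : Shape} {l : List Shape} (hl : l ≠ [])
    (h : IsStripChain (r :: l)) (ht : IsStrip r t) :
    Descends (top (slide (r :: l))) r t ↔
      Descends (top (slide l)) (top l) (toggle (top l) r t) := by
  have hs := h.2.slide.2
  rw [slide_cons r hl, top_cons, descends_toggle_iff (isStrip_toggle_left hs h.1)
    (isStrip_toggle_right hs h.1) ht, toggle_toggle hs h.1]

theorem descends_cons_iff {r t : Shape} {l : List Shape} (hl : l ≠ [])
    (h : IsStripChain (r :: l)) (ht : IsStrip r t) :
    Descends (top l) r t ↔ Descends (top (slide l)) (top (slide (r :: l)))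
      (toggle (top (slide (r :: l))) r t) := by
  rw [slide_cons r hl, top_cons, descends_toggle_iff h.2.slide.2 h.1 ht]

theorem allDescend_iff_slide : ∀ {l : List Shape}, IsStripChain l → 2 ≤ l.length →
    (AllDescend l ↔
      AllDescend (slide l) ∧ Descends (top (slide (slide l))) (top (slide l)) (top l))
  | [r, m], ⟨hr, hm, _⟩, _ => by
    simp only [AllDescend, slide, and_true, true_and, top_cons]
    exact (descends_zero_iff hm hr).trans
      (descends_zero_iff (isStrip_toggle_left hm hr) (isStrip_toggle_right hm hr)).symm
  | r :: m :: n :: l, ⟨hr, hm⟩, _ => by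
    have ih := allDescend_iff_slide hm (by simp)
    have hne : slide (m :: n :: l) ≠ [] := slide_cons_ne_nil m (List.cons_ne_nil n l)
    have hs := hm.slide.2
    have hcol := descends_slide_cons_iff (l := slide (m :: n :: l)) hne
      ⟨isStrip_toggle_left hs hr, hm.slide.1⟩ (isStrip_toggle_right hs hr)
    have htoggle : toggle (top (slide (m :: n :: l))) (toggle _ m r) r = m := toggle_toggle hs hr
    rw [top_cons, htoggle] at hcol
    have hrow := descends_cons_iff (List.cons_ne_nil n l) hm hr
    rw [allDescend_cons r (List.cons_ne_nil m _), ih, slide_cons r (List.cons_ne_nil m _),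
      allDescend_cons _ hne, tail_slide_cons, List.tail_cons]
    simp only [top_cons] at hcol hrow ⊢
    rw [hrow, hcol]
    tauto

/-- Schützenberger's evacuation: the tops of the successive slides of the chain. -/
def evacuate : List Shape → List Shape
  | [] => []
  | r :: l => r :: evacuate (slide (r :: l))
termination_by l => l.length
decreasing_by simp [length_slide_cons]

theorem top_evacuate (l : List Shape) : top (evacuate l) = top l := by
  cases l with
  | nil => rw [evacuate]
  | cons r l => rw [evacuate, top_cons, top_cons]

theorem evacuate_ne_nil {l : List Shape} (hl : l ≠ []) : evacuate l ≠ [] := by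
  obtain ⟨r, l, rfl⟩ := List.exists_cons_of_ne_nil hl
  rw [evacuate]
  exact List.cons_ne_nil _ _

theorem tail_evacuate (l : List Shape) : (evacuate l).tail = evacuate (slide l) := by
  cases l with
  | nil => rw [slide, evacuate, List.tail_nil]
  | cons r l => rw [evacuate, List.tail_cons]

theorem IsStripChain.evacuate (l : List Shape) (h : IsStripChain l) :
    IsStripChain (evacuate l) := by
  induction l using evacuate.induct with
  | case1 => rwa [RibbonLR.evacuate]
  | case2 r l ih =>
    rw [RibbonLR.evacuate, IsStripChain, top_evacuate]
    exact ⟨h.slide.2, ih h.slide.1⟩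

theorem slide_evacuate (l : List Shape) (h : IsStripChain l) :
    slide (evacuate l) = evacuate l.tail := by
  induction l using evacuate.induct with
  | case1 => rw [evacuate, slide, List.tail_nil, evacuate]
  | case2 r l ih =>
    rw [evacuate, List.tail_cons]
    cases l with
    | nil => simp [slide, evacuate]
    | cons m l =>
      have hne : slide (r :: m :: l) ≠ [] := slide_cons_ne_nil r (List.cons_ne_nil m l)
      rw [slide_cons r (evacuate_ne_nil hne), ih h.slide.1, tail_slide_cons, top_evacuate,
        top_evacuate, slide_cons r (List.cons_ne_nil m l), top_cons,
        toggle_toggle h.2.slide.2 h.1, evacuate, top_cons]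

theorem evacuate_evacuate : ∀ l : List Shape, IsStripChain l → evacuate (evacuate l) = l
  | [], _ => by rw [evacuate, evacuate]
  | r :: l, h => by
    have hs := slide_evacuate (r :: l) h
    rw [evacuate] at hs ⊢
    rw [evacuate, hs, List.tail_cons, evacuate_evacuate l h.2]

theorem top_tail_evacuate (l : List Shape) : top (evacuate l).tail = top (slide l) := by
  rw [tail_evacuate, top_evacuate]

theorem top_slide_evacuate {l : List Shape} (h : IsStripChain l) :
    top (slide (evacuate l)) = top l.tail := by
  rw [slide_evacuate l h, top_evacuate]

end Chains

section RibbonChains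

/-- The strips of the chain have the sizes `α`, outermost strip first. -/
def HasContent (M : ℕ) : List ℕ → List Shape → Prop
  | [], [] => True
  | y :: α, r :: l => size M r = size M (top l) + y ∧ HasContent M α l
  | _, _ => False

/-- A chain of partitions with at most `M` rows which, read as a standard tableau with descents
exactly between consecutive strips, contributes to the Schur expansion of the ribbon with row
lengths `α`. -/
structure IsRibbonChain (M : ℕ) (α : List ℕ) (l : List Shape) : Prop where
  isStripChain : IsStripChain l
  hasContent : HasContent M α l
  allDescend : AllDescend l
  support : ∀ a, M ≤ a → top l a = 0

variable {M x y : ℕ} {α β : List ℕ} {ρ r : Shape} {l : List Shape} {E L : Set Shape}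

theorem HasContent.length_eq {M : ℕ} : ∀ {α : List ℕ} {l : List Shape}, HasContent M α l →
    l.length = α.length
  | [], [], _ => rfl
  | _ :: _, _ :: _, h => by simp [h.2.length_eq]

theorem IsRibbonChain.length_eq (h : IsRibbonChain M α l) : l.length = α.length :=
  h.hasContent.length_eq

theorem IsRibbonChain.ne_nil (h : IsRibbonChain M α l) (hα : α ≠ []) : l ≠ [] :=
  List.ne_nil_of_length_pos (h.length_eq ▸ List.length_pos_of_ne_nil hα)

theorem isRibbonChain_cons (hα : α ≠ []) :
    IsRibbonChain M (y :: α) (r :: l) ↔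
      IsStrip (top l) r ∧ size M r = size M (top l) + y ∧ IsRibbonChain M α l ∧
        Descends (top l.tail) (top l) r ∧ ∀ a, M ≤ a → r a = 0 := by
  constructor
  · rintro ⟨⟨hr, hchain⟩, ⟨hy, hcontent⟩, hdes, hsupp⟩
    have hl : l ≠ [] := List.ne_nil_of_length_pos
      (hcontent.length_eq ▸ List.length_pos_of_ne_nil hα)
    rw [allDescend_cons _ hl] at hdes
    exact ⟨hr, hy, ⟨hchain, hcontent, hdes.2, hr.eq_zero_of_le hsupp⟩, hdes.1, hsupp⟩
  · rintro ⟨hr, hy, h, hdes, hsupp⟩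
    exact ⟨⟨hr, h.isStripChain⟩, ⟨hy, h.hasContent⟩,
      (allDescend_cons _ (h.ne_nil hα)).2 ⟨hdes, h.allDescend⟩, hsupp⟩

theorem hasContent_concat : ∀ {α : List ℕ} {l : List Shape}, IsStripChain l → l ≠ [] →
    (∀ a, M ≤ a → top l a = 0) →
      (HasContent M (α ++ [x]) l ↔
        HasContent M α (slide l) ∧ size M (top l) = size M (top (slide l)) + x)
  | [], [_], _, _, _ => by simp [HasContent, slide, top_cons]
  | [], _ :: _ :: _, _, _, _ => by simp [HasContent, slide]
  | [_], [_], _, _, _ => by simp [HasContent, slide]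
  | _ :: _ :: _, [_], _, _, _ => by simp [HasContent, slide]
  | y :: α, r :: m :: l, ⟨hr, hl⟩, _, hsupp => by
    have ih := hasContent_concat (α := α) hl (List.cons_ne_nil m l) (hr.eq_zero_of_le hsupp)
    have hsize := size_toggle hl.slide.2 hr hsupp
    rw [slide_cons r (List.cons_ne_nil m l), List.cons_append, HasContent, HasContent, ih]
    simp only [top_cons] at hsize ⊢
    constructor
    · rintro ⟨hy, hcontent, hx⟩
      exact ⟨⟨by omega, hcontent⟩, by omega⟩
    · rintro ⟨⟨hy, hcontent⟩, hx⟩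
      exact ⟨by omega, hcontent, by omega⟩

theorem isRibbonChain_concat (hα : α ≠ []) :
    IsRibbonChain M (α ++ [x]) l ↔
      l ≠ [] ∧ IsStripChain l ∧ IsRibbonChain M α (slide l) ∧
        size M (top l) = size M (top (slide l)) + x ∧
        Descends (top (slide (slide l))) (top (slide l)) (top l) ∧ ∀ a, M ≤ a → top l a = 0 := by
  have hα' := List.length_pos_of_ne_nil hα
  constructor
  · intro h
    have hl : l ≠ [] := h.ne_nil (by simp)
    have hlen : 2 ≤ l.length := by simp [h.length_eq]; omega
    obtain ⟨hchain, hcontent, hdes, hsupp⟩ := h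
    rw [hasContent_concat hchain hl hsupp] at hcontent
    rw [allDescend_iff_slide hchain hlen] at hdes
    exact ⟨hl, hchain, ⟨hchain.slide.1, hcontent.1, hdes.1, hchain.slide.2.eq_zero_of_le hsupp⟩,
      hcontent.2, hdes.2, hsupp⟩
  · rintro ⟨hl, hchain, h, hx, hdes, hsupp⟩
    have hlen : 2 ≤ l.length := by
      have := h.length_eq
      obtain ⟨r, l, rfl⟩ := List.exists_cons_of_ne_nil hl
      rw [length_slide_cons] at this
      simp only [List.length_cons]
      omega
    exact ⟨hchain, (hasContent_concat hchain hl hsupp).2 ⟨h.hasContent, hx⟩,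
      (allDescend_iff_slide hchain hlen).2 ⟨h.allDescend, hdes⟩, hsupp⟩

theorem IsRibbonChain.evacuate (h : IsRibbonChain M α l) :
    IsRibbonChain M α.reverse (evacuate l) := by
  induction α using List.reverseRecOn generalizing l with
  | nil =>
    obtain rfl : l = [] := List.length_eq_zero_iff.1 h.length_eq
    rwa [RibbonLR.evacuate]
  | append_singleton α x ih =>
    by_cases hα : α = []
    · subst hα
      obtain ⟨r, rfl⟩ := List.length_eq_one_iff.1 h.length_eq
      simpa [RibbonLR.evacuate, slide] using h
    · obtain ⟨hl, hchain, hslide, hx, hdes, hsupp⟩ := (isRibbonChain_concat hα).1 h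
      obtain ⟨r, l, rfl⟩ := List.exists_cons_of_ne_nil hl
      rw [RibbonLR.evacuate, List.reverse_append, List.reverse_singleton, List.singleton_append,
        isRibbonChain_cons (by simpa using hα), top_evacuate, top_tail_evacuate]
      exact ⟨hchain.slide.2, hx, ih hslide, hdes, hsupp⟩

/-- The ribbon chains with top `ρ` for which, moreover, each strip of `E` added on top descends with
the slide of the chain, and each strip of `L` added on top descends with the chain itself. These
are the boundary conditions met by the part of a longer chain with content `α`. -/
def boundedChains (M : ℕ) (α : List ℕ) (ρ : Shape) (E L : Set Shape) : Set (List Shape) :=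
  {l | IsRibbonChain M α l ∧ top l = ρ ∧ (∀ τ ∈ E, Descends (top (slide l)) ρ τ) ∧
    ∀ τ ∈ L, Descends (top l.tail) ρ τ}

/-- Under all boundary conditions, the chains with content `α` inject into those with content `β`.
This is a precongruence for concatenation of contents. -/
def ChainLE (M : ℕ) (α β : List ℕ) : Prop :=
  ∀ (ρ : Shape) (E L : Set Shape), (∀ τ ∈ E, IsStrip ρ τ) → (∀ τ ∈ L, IsStrip ρ τ) →
    Injects (boundedChains M α ρ E L) (boundedChains M β ρ E L)

theorem evacuate_mem_boundedChains (h : l ∈ boundedChains M α ρ E L) :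
    evacuate l ∈ boundedChains M α.reverse ρ L E := by
  obtain ⟨hl, htop, hE, hL⟩ := h
  refine ⟨hl.evacuate, (top_evacuate l).trans htop, ?_, ?_⟩
  · rwa [top_slide_evacuate hl.isStripChain]
  · rwa [top_tail_evacuate]

theorem injects_boundedChains_reverse (α : List ℕ) (ρ : Shape) (E L : Set Shape) :
    Injects (boundedChains M α ρ E L) (boundedChains M α.reverse ρ L E) :=
  .of_leftInvOn (fun _ => evacuate_mem_boundedChains)
    fun l hl => evacuate_evacuate l hl.1.isStripChain

theorem ChainLE.reverse (h : ChainLE M α β) : ChainLE M α.reverse β.reverse := by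
  intro ρ E L hE hL
  have hα := injects_boundedChains_reverse (M := M) α.reverse ρ E L
  rw [List.reverse_reverse] at hα
  exact (hα.trans (h ρ L E hL hE)).trans (injects_boundedChains_reverse β ρ L E)

theorem cons_mem_boundedChains (hα : α ≠ []) (hE : ∀ τ ∈ E, IsStrip ρ τ) :
    r :: l ∈ boundedChains M (y :: α) ρ E L ↔
      r = ρ ∧ IsStrip (top l) ρ ∧ size M ρ = size M (top l) + y ∧ (∀ a, M ≤ a → ρ a = 0) ∧
        (∀ τ ∈ L, Descends (top l) ρ τ) ∧
        l ∈ boundedChains M α (top l) ((toggle (top l) ρ ·) '' E) {ρ} := by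
  constructor
  · rintro ⟨h, rfl, hEr, hLr⟩
    obtain ⟨hr, hy, hl, hdes, hsupp⟩ := (isRibbonChain_cons hα).1 h
    refine ⟨rfl, hr, hy, hsupp, hLr, hl, rfl, ?_, by rintro _ rfl; exact hdes⟩
    rintro _ ⟨τ, hτ, rfl⟩
    exact (descends_slide_cons_iff (hl.ne_nil hα) h.isStripChain (hE τ hτ)).1 (hEr τ hτ)
  · rintro ⟨rfl, hr, hy, hsupp, hLr, hl, -, hEl, hdes⟩
    have h : IsRibbonChain M (y :: α) (r :: l) :=
      (isRibbonChain_cons hα).2 ⟨hr, hy, hl, hdes r rfl, hsupp⟩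
    exact ⟨h, rfl, fun τ hτ => (descends_slide_cons_iff (hl.ne_nil hα) h.isStripChain (hE τ hτ)).2
      (hEl _ ⟨τ, hτ, rfl⟩), hLr⟩

theorem exists_eq_cons_of_mem_boundedChains (h : l ∈ boundedChains M (y :: α) ρ E L) :
    ∃ r k, l = r :: k :=
  List.exists_cons_of_ne_nil (h.1.ne_nil (List.cons_ne_nil y α))

theorem ChainLE.cons (hα : α ≠ []) (hβ : β ≠ []) (h : ChainLE M α β) (y : ℕ) :
    ChainLE M (y :: α) (y :: β) := by
  intro ρ E L hE hL
  refine .of_fibers (fun l => top l.tail) (fun l => top l.tail) fun κ => ?_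
  by_cases hκ : IsStrip κ ρ
  · obtain ⟨F, hF, hFinj⟩ := h κ ((toggle κ ρ ·) '' E) {ρ}
      (by rintro _ ⟨τ, hτ, rfl⟩; exact isStrip_toggle_left hκ (hE τ hτ))
      (by rintro _ rfl; exact hκ)
    refine ⟨fun l => ρ :: F l.tail, ?_, ?_⟩
    · rintro l ⟨hl, rfl⟩
      obtain ⟨r, k, rfl⟩ := exists_eq_cons_of_mem_boundedChains hl
      obtain ⟨-, hstrip, hy, hsupp, hLr, hk⟩ := (cons_mem_boundedChains hα hE).1 hl
      have hFk := hF hk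
      dsimp only [List.tail_cons] at hFk ⊢
      refine ⟨(cons_mem_boundedChains hβ hE).2 ?_, hFk.2.1⟩
      rw [hFk.2.1]
      exact ⟨rfl, hstrip, hy, hsupp, hLr, hFk⟩
    · rintro l ⟨hl, hlκ⟩ l' ⟨hl', hlκ'⟩ heq
      obtain ⟨r, k, rfl⟩ := exists_eq_cons_of_mem_boundedChains hl
      obtain ⟨r', k', rfl⟩ := exists_eq_cons_of_mem_boundedChains hl'
      obtain ⟨rfl, -, -, -, -, hk⟩ := (cons_mem_boundedChains hα hE).1 hl
      obtain ⟨rfl, -, -, -, -, hk'⟩ := (cons_mem_boundedChains hα hE).1 hl'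
      rw [List.tail_cons] at hlκ hlκ'
      rw [hlκ] at hk
      rw [hlκ'] at hk'
      rw [hFinj hk hk' (List.cons.inj heq).2]
  · refine ⟨id, fun l hl => absurd ?_ hκ, fun l hl => absurd ?_ hκ⟩ <;>
    · obtain ⟨hl, rfl⟩ := hl
      obtain ⟨r, k, rfl⟩ := exists_eq_cons_of_mem_boundedChains hl
      exact ((cons_mem_boundedChains hα hE).1 hl).2.1

theorem ChainLE.append_left (hα : α ≠ []) (hβ : β ≠ []) (h : ChainLE M α β) :
    ∀ γ : List ℕ, ChainLE M (γ ++ α) (γ ++ β)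
  | [] => h
  | y :: γ => (h.append_left hα hβ γ).cons (by simp [hα]) (by simp [hβ]) y

theorem ChainLE.append_right (hα : α ≠ []) (hβ : β ≠ []) (h : ChainLE M α β) (γ : List ℕ) :
    ChainLE M (α ++ γ) (β ++ γ) := by
  have := (h.reverse.append_left (by simpa using hα) (by simpa using hβ) γ.reverse).reverse
  simpa using this

end RibbonChains

section Crystal

/-- The sum of the entries with indices in `[j, M)`. -/
def tailSum (M j : ℕ) (q : Shape) : ℤ := ∑ i ∈ Ico j M, (q i : ℤ)

/-- The `sl₂`-weight of `q`, as an element of the tensor product over `i ∈ [j, M)` of the strings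
`{0, …, f i}`. -/
def weight (f : Shape) (M j : ℕ) (q : Shape) : ℤ := 2 * tailSum M j q - tailSum M j f

variable {f q q' : Shape} {M j : ℕ}

theorem tailSum_eq_add (h : j < M) (q : Shape) : tailSum M j q = q j + tailSum M (j + 1) q :=
  sum_eq_sum_Ico_succ_bot h _

theorem tailSum_congr (h : ∀ i, j ≤ i → q i = q' i) : tailSum M j q = tailSum M j q' :=
  sum_congr rfl fun i hi => by rw [h i (mem_Ico.1 hi).1]

theorem tailSum_nonneg (M j : ℕ) (q : Shape) : 0 ≤ tailSum M j q :=
  sum_nonneg fun _ _ => Nat.cast_nonneg _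

theorem weight_eq_add (h : j < M) (f q : Shape) :
    weight f M j q = weight f M (j + 1) q + (2 * q j - f j) := by
  unfold weight
  rw [tailSum_eq_add h, tailSum_eq_add h]
  ring

theorem weight_congr (f : Shape) (h : ∀ i, j ≤ i → q i = q' i) :
    weight f M j q = weight f M j q' := by
  unfold weight
  rw [tailSum_congr h]

/-- `op` is the lowering operator of a normal `sl₂`-crystal on the set `G` of shapes below `f`, with
weights given by `weight f M j` and with `ε q` steps from the top of the string of `q` down to `q`;
accordingly `op` may be applied to `q` another `weight f M j q + ε q` times. The operator depends
on and changes only the rows `≥ j`. -/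
structure IsCrystal (f : Shape) (M j : ℕ) (G : Set Shape) (ε : Shape → ℤ)
    (op : Shape → Shape) : Prop where
  le : ∀ q ∈ G, q ≤ f
  eps_nonneg : ∀ q ∈ G, 0 ≤ ε q
  phi_nonneg : ∀ q ∈ G, 0 ≤ weight f M j q + ε q
  eps_le : ∀ q ∈ G, ε q ≤ tailSum M j f - tailSum M j q
  op_mem : ∀ q ∈ G, 0 < weight f M j q + ε q → op q ∈ G
  eps_op : ∀ q ∈ G, 0 < weight f M j q + ε q → ε (op q) = ε q + 1
  op_le : ∀ q ∈ G, 0 < weight f M j q + ε q → op q ≤ q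
  tailSum_op : ∀ q ∈ G, 0 < weight f M j q + ε q → tailSum M j (op q) = tailSum M j q - 1
  op_apply : ∀ q ∈ G, 0 < weight f M j q + ε q → ∀ i < j, op q i = q i
  injOn : InjOn op {q ∈ G | 0 < weight f M j q + ε q}
  exists_pos_op : ∀ q ∈ G, 2 ≤ weight f M j q + ε q → ∀ h, (∃ i, j ≤ i ∧ i < h ∧ 0 < q i) →
    ∃ i, j ≤ i ∧ i < h ∧ 0 < op q i
  eps_congr : ∀ q q', (∀ i, j ≤ i → q i = q' i) → ε q = ε q'
  mem_congr : ∀ q q', (∀ i, j ≤ i → q i = q' i) → q ∈ G → q' ≤ f → q' ∈ G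

theorem isCrystal_empty (f : Shape) (M : ℕ) : IsCrystal f M M {q | q ≤ f} 0 id := by
  constructor <;> simp [weight, tailSum]

/-- The function `ε` of the tensor product with the string of row `j`. -/
def tensorEps (f : Shape) (M j : ℕ) (ε : Shape → ℤ) (q : Shape) : ℤ :=
  max (ε q) (f j - q j - weight f M (j + 1) q)

open Classical in
/-- The lowering operator of the tensor product with the string of row `j`. -/
noncomputable def tensorOp (f : Shape) (M j : ℕ) (ε : Shape → ℤ) (op : Shape → Shape)
    (q : Shape) : Shape :=
  if (f j - q j : ℤ) < weight f M (j + 1) q + ε q then op q else update q j (q j - 1)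

variable {G : Set Shape} {ε : Shape → ℤ} {op : Shape → Shape}

theorem tensorOp_of_le (hj : j < M)
    (hphi : 0 < weight f M j q + tensorEps f M j ε q)
    (h : weight f M (j + 1) q + ε q ≤ f j - q j) :
    tensorOp f M j ε op q = update q j (q j - 1) ∧ 0 < q j ∧ update q j (q j - 1) ≤ q ∧
      ∀ i, j + 1 ≤ i → update q j (q j - 1) i = q i := by
  refine ⟨if_neg h.not_gt, ?_, ?_, fun i hi => update_of_ne (by omega) _ _⟩
  · rw [weight_eq_add hj, tensorEps, max_eq_right (by omega)] at hphi
    omega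
  · exact update_le_self_iff.2 (Nat.sub_le _ _)

namespace IsCrystal

theorem tensorOp_of_lt (B : IsCrystal f M (j + 1) G ε op) (hq : q ∈ G)
    (h : (f j - q j : ℤ) < weight f M (j + 1) q + ε q) :
    tensorOp f M j ε op q = op q ∧ 0 < weight f M (j + 1) q + ε q ∧ op q j = q j ∧
      weight f M (j + 1) (op q) = weight f M (j + 1) q - 2 := by
  have hle : q j ≤ f j := B.le q hq j
  have hphi : 0 < weight f M (j + 1) q + ε q := by omega
  refine ⟨if_pos h, hphi, B.op_apply q hq hphi j j.lt_succ_self, ?_⟩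
  unfold weight
  rw [B.tailSum_op q hq hphi]
  ring

theorem tensorOp_spec (B : IsCrystal f M (j + 1) G ε op) (hj : j < M) (hq : q ∈ G)
    (hphi : 0 < weight f M j q + tensorEps f M j ε q) :
    tensorOp f M j ε op q ∈ G ∧
      tensorEps f M j ε (tensorOp f M j ε op q) = tensorEps f M j ε q + 1 ∧
      tensorOp f M j ε op q ≤ q ∧
      tailSum M j (tensorOp f M j ε op q) = tailSum M j q - 1 ∧
      ∀ i < j, tensorOp f M j ε op q i = q i := by
  rcases lt_or_ge (f j - q j : ℤ) (weight f M (j + 1) q + ε q) with h | h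
  · obtain ⟨hop, hphi', hopj, hweight⟩ := B.tensorOp_of_lt hq h
    rw [hop]
    refine ⟨B.op_mem q hq hphi', ?_, B.op_le q hq hphi', ?_,
      fun i hi => B.op_apply q hq hphi' i (by omega)⟩
    · rw [tensorEps, tensorEps, B.eps_op q hq hphi', hopj, hweight]
      omega
    · rw [tailSum_eq_add hj, tailSum_eq_add hj, B.tailSum_op q hq hphi', hopj]
      ring
  · obtain ⟨hop, hpos, hle, hcongr⟩ := tensorOp_of_le (op := op) hj hphi h
    rw [hop]
    refine ⟨B.mem_congr q _ (fun i hi => (hcongr i hi).symm) hq (hle.trans (B.le q hq)), ?_, hle,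
      ?_, fun i hi => update_of_ne hi.ne _ _⟩
    · rw [tensorEps, tensorEps, B.eps_congr _ _ hcongr, weight_congr f hcongr, update_self]
      omega
    · rw [tailSum_eq_add hj, tailSum_eq_add hj, tailSum_congr hcongr, update_self]
      omega

theorem le_tensorOp_iff (B : IsCrystal f M (j + 1) G ε op) (hj : j < M) (hq : q ∈ G)
    (hphi : 0 < weight f M j q + tensorEps f M j ε q) :
    (f j - tensorOp f M j ε op q j : ℤ) ≤ weight f M (j + 1) (tensorOp f M j ε op q) +
        ε (tensorOp f M j ε op q) ↔
      (f j - q j : ℤ) < weight f M (j + 1) q + ε q := by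
  rcases lt_or_ge (f j - q j : ℤ) (weight f M (j + 1) q + ε q) with h | h
  · obtain ⟨hop, hphi', hopj, hweight⟩ := B.tensorOp_of_lt hq h
    rw [hop, B.eps_op q hq hphi', hopj, hweight]
    omega
  · obtain ⟨hop, hpos, -, hcongr⟩ := tensorOp_of_le (op := op) hj hphi h
    rw [hop, B.eps_congr _ _ hcongr, weight_congr f hcongr, update_self]
    omega

theorem injOn_tensorOp (B : IsCrystal f M (j + 1) G ε op) (hj : j < M) :
    InjOn (tensorOp f M j ε op) {q ∈ G | 0 < weight f M j q + tensorEps f M j ε q} := by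
  rintro q ⟨hq, hphi⟩ q' ⟨hq', hphi'⟩ heq
  have hiff := B.le_tensorOp_iff hj hq hphi
  rw [heq, B.le_tensorOp_iff hj hq' hphi'] at hiff
  rcases lt_or_ge (f j - q j : ℤ) (weight f M (j + 1) q + ε q) with h | h
  · obtain ⟨hop, hpos, -⟩ := B.tensorOp_of_lt hq h
    obtain ⟨hop', hpos', -⟩ := B.tensorOp_of_lt hq' (hiff.2 h)
    exact B.injOn ⟨hq, hpos⟩ ⟨hq', hpos'⟩ (hop.symm.trans (heq.trans hop'))
  · obtain ⟨hop, hpos, -⟩ := tensorOp_of_le (op := op) hj hphi h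
    obtain ⟨hop', hpos', -⟩ := tensorOp_of_le (op := op) hj hphi'
      (not_lt.1 fun h' => h.not_gt (hiff.1 h'))
    rw [hop, hop'] at heq
    funext i
    have hi := congrFun heq i
    by_cases hij : i = j
    · subst hij
      rw [update_self, update_self] at hi
      omega
    · rwa [update_of_ne hij, update_of_ne hij] at hi

theorem exists_pos_tensorOp (B : IsCrystal f M (j + 1) G ε op) (hj : j < M) (hq : q ∈ G)
    (hphi : 2 ≤ weight f M j q + tensorEps f M j ε q) {h : ℕ}
    (hpos : ∃ i, j ≤ i ∧ i < h ∧ 0 < q i) : ∃ i, j ≤ i ∧ i < h ∧ 0 < tensorOp f M j ε op q i := by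
  obtain ⟨i, hji, hih, hqi⟩ := hpos
  rw [weight_eq_add hj, tensorEps] at hphi
  rcases lt_or_ge (f j - q j : ℤ) (weight f M (j + 1) q + ε q) with hlt | hle
  · obtain ⟨hop, -, hopj, -⟩ := B.tensorOp_of_lt hq hlt
    rw [hop]
    rcases Nat.eq_zero_or_pos (q j) with hqj | hqj
    · have hij : i ≠ j := by
        rintro rfl
        omega
      obtain ⟨i', hji', hi'⟩ := B.exists_pos_op q hq (by omega) h ⟨i, by omega, hih, hqi⟩
      exact ⟨i', by omega, hi'⟩
    · exact ⟨j, le_rfl, by omega, hopj ▸ hqj⟩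
  · refine ⟨j, le_rfl, by omega, ?_⟩
    rw [tensorOp, if_neg hle.not_gt, update_self]
    omega

theorem tensor (B : IsCrystal f M (j + 1) G ε op) (hj : j < M) :
    IsCrystal f M j G (tensorEps f M j ε) (tensorOp f M j ε op) where
  le := B.le
  eps_nonneg q hq := (B.eps_nonneg q hq).trans (le_max_left _ _)
  phi_nonneg q _ := by
    rw [weight_eq_add hj, tensorEps]
    omega
  eps_le q hq := by
    have := B.eps_le q hq
    have := tailSum_nonneg M (j + 1) q
    have hle : q j ≤ f j := B.le q hq j
    simp only [tensorEps, weight, tailSum_eq_add hj]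
    omega
  op_mem q hq hphi := (B.tensorOp_spec hj hq hphi).1
  eps_op q hq hphi := (B.tensorOp_spec hj hq hphi).2.1
  op_le q hq hphi := (B.tensorOp_spec hj hq hphi).2.2.1
  tailSum_op q hq hphi := (B.tensorOp_spec hj hq hphi).2.2.2.1
  op_apply q hq hphi := (B.tensorOp_spec hj hq hphi).2.2.2.2
  injOn := B.injOn_tensorOp hj
  exists_pos_op _ hq hphi _ hpos := B.exists_pos_tensorOp hj hq hphi hpos
  eps_congr q q' h := by
    have h' : ∀ i, j + 1 ≤ i → q i = q' i := fun i hi => h i (by omega)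
    rw [tensorEps, tensorEps, B.eps_congr q q' h', weight_congr f h', h j le_rfl]
  mem_congr q q' h := B.mem_congr q q' fun i hi => h i (by omega)

theorem exists_extend (B : IsCrystal f M j G ε op) (hj : j ≤ M) {k : ℕ} (hk : k ≤ j) :
    ∃ ε' op', IsCrystal f M k G ε' op' := by
  induction hk using Nat.decreasingInduction with
  | self => exact ⟨ε, op, B⟩
  | of_succ k hk ih =>
    obtain ⟨ε', op', B'⟩ := ih
    exact ⟨_, _, B'.tensor (by omega)⟩

/-- Deleting the two ends of the string that joins `q = f` to `q = 0` leaves a crystal. -/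
theorem exists_restrict (B : IsCrystal f M j {q | q ≤ f} ε op) :
    ∃ ε', IsCrystal f M j {q | q ≤ f ∧ 0 < tailSum M j q ∧ tailSum M j q < tailSum M j f}
      ε' op := by
  classical
  obtain ⟨ε', hε'⟩ : ∃ ε' : Shape → ℤ, ∀ q,
      ε' q = if ε q = tailSum M j f - tailSum M j q then ε q - 1 else ε q := ⟨_, fun _ => rfl⟩
  have hphi : ∀ q ≤ f, 0 < weight f M j q + ε' q →
      0 < weight f M j q + ε q ∧ 1 < tailSum M j q := by
    intro q hq h
    have := B.eps_le q hq
    have := B.phi_nonneg q hq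
    simp only [hε', weight] at *
    split_ifs at h <;> omega
  refine ⟨ε', fun q hq => hq.1, fun q hq => ?_, fun q hq => ?_, fun q hq => ?_,
    fun q hq h => ?_, fun q hq h => ?_, fun q hq h => B.op_le q hq.1 (hphi q hq.1 h).1,
    fun q hq h => B.tailSum_op q hq.1 (hphi q hq.1 h).1,
    fun q hq h => B.op_apply q hq.1 (hphi q hq.1 h).1,
    B.injOn.mono ?_, fun q hq h => ?_, ?_, ?_⟩
  · have hε : 0 ≤ ε q := B.eps_nonneg q hq.1
    have hlt : tailSum M j q < tailSum M j f := hq.2.2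
    rw [hε']
    split_ifs <;> omega
  · have hφ := B.phi_nonneg q hq.1
    have hpos : 0 < tailSum M j q := hq.2.1
    simp only [hε', weight] at hφ ⊢
    split_ifs <;> omega
  · have := B.eps_le q hq.1
    rw [hε']
    split_ifs <;> omega
  · have hsum := B.tailSum_op q hq.1 (hphi q hq.1 h).1
    have := (hphi q hq.1 h).2
    have := hq.2
    exact ⟨B.op_mem q hq.1 (hphi q hq.1 h).1, by omega, by omega⟩
  · simp only [hε', B.tailSum_op q hq.1 (hphi q hq.1 h).1, B.eps_op q hq.1 (hphi q hq.1 h).1]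
    split_ifs <;> omega
  · rintro q ⟨hq, h⟩
    exact ⟨hq.1, (hphi q hq.1 h).1⟩
  · refine B.exists_pos_op q hq.1 ?_
    rw [hε'] at h
    split_ifs at h <;> omega
  · intro q q' h
    simp only [hε', B.eps_congr q q' h, tailSum_congr h]
  · intro q q' h hq hq'
    exact ⟨hq', tailSum_congr h ▸ hq.2⟩

end IsCrystal

/-- `q` is neither empty nor full on the rows `≥ j`, unless this is waived by `waive`. -/
def IsProper (f : Shape) (M : ℕ) (waive : Prop) (j : ℕ) (q : Shape) : Prop :=
  waive ∨ (0 < tailSum M j q ∧ tailSum M j q < tailSum M j f)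

/-- The domain of the lowering operator `exists_lowering`. -/
def loweringDomain (f : Shape) (M : ℕ) (waive : Prop) (j : ℕ) : Set Shape :=
  {q | q ≤ f ∧ IsProper f M waive j q ∧ 2 ≤ weight f M 0 q}

theorem exists_isCrystal (f : Shape) {M j : ℕ} (waive : Prop) (hj : j ≤ M) :
    ∃ ε op, IsCrystal f M 0 {q | q ≤ f ∧ IsProper f M waive j q} ε op := by
  by_cases hF : waive
  · simpa [IsProper, hF] using (isCrystal_empty f M).exists_extend le_rfl M.zero_le
  · obtain ⟨ε, op, B⟩ := (isCrystal_empty f M).exists_extend le_rfl hj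
    obtain ⟨ε', B'⟩ := B.exists_restrict
    simpa [IsProper, hF] using B'.exists_extend hj j.zero_le

theorem exists_lowering (f : Shape) {M j : ℕ} (waive : Prop) (hj : j ≤ M) :
    ∃ op : Shape → Shape, InjOn op (loweringDomain f M waive j) ∧
      ∀ q ∈ loweringDomain f M waive j, IsProper f M waive j (op q) ∧ op q ≤ q ∧
        tailSum M 0 (op q) = tailSum M 0 q - 1 ∧
        ∀ h, (∃ i < h, 0 < q i) → ∃ i < h, 0 < op q i := by
  obtain ⟨ε, op, B⟩ := exists_isCrystal f waive hj
  have hphi : ∀ q ∈ loweringDomain f M waive j, 2 ≤ weight f M 0 q + ε q := fun q hq => by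
    have := B.eps_nonneg q ⟨hq.1, hq.2.1⟩
    have := hq.2.2
    omega
  refine ⟨op, fun q hq q' hq' => B.injOn ⟨⟨hq.1, hq.2.1⟩, zero_lt_two.trans_le (hphi q hq)⟩
    ⟨⟨hq'.1, hq'.2.1⟩, zero_lt_two.trans_le (hphi q' hq')⟩, fun q hq => ?_⟩
  have hG : q ∈ {q | q ≤ f ∧ IsProper f M waive j q} := ⟨hq.1, hq.2.1⟩
  have hpos : 0 < weight f M 0 q + ε q := zero_lt_two.trans_le (hphi q hq)
  refine ⟨(B.op_mem q hG hpos).2, B.op_le q hG hpos, B.tailSum_op q hG hpos, ?_⟩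
  rintro h ⟨i, hih, hqi⟩
  obtain ⟨i', -, hi'⟩ := B.exists_pos_op q hG (hphi q hq) h ⟨i, i.zero_le, hih, hqi⟩
  exact ⟨i', hi'⟩

end Crystal

section Splits

/-- Row by row, the number of boxes that can be added to `κ` between the strips `κ / l` and
`r / κ`. -/
def deficit (l r κ : Shape) : Shape := fun i => stripMax l r i - κ i

/-- The upper bound for `deficit l r`. -/
def capacity (l r : Shape) : Shape := fun i => stripMax l r i - stripMin l r i

/-- `κ` splits `r / l` into a horizontal strip with `q` boxes and one with `p` boxes; each strip of
`E` added on top of `r` descends with `κ`, and each strip of `L` descends with the toggle of `κ`. -/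
structure IsSplit (M : ℕ) (l r : Shape) (E L : Set Shape) (q p : ℕ) (κ : Shape) : Prop where
  left : IsStrip l κ
  right : IsStrip κ r
  support : ∀ a, M ≤ a → r a = 0
  size_left : size M κ = size M l + q
  size_right : size M r = size M κ + p
  descends : ∀ τ ∈ E, Descends κ r τ
  descends_toggle : ∀ τ ∈ L, Descends (toggle l κ r) r τ

variable {M q p : ℕ} {l r κ g : Shape} {E L : Set Shape}

theorem tailSum_zero (M : ℕ) (κ : Shape) : tailSum M 0 κ = size M κ := by
  simp [tailSum, size]

theorem tailSum_pos_iff {j : ℕ} : 0 < tailSum M j κ ↔ ∃ i, j ≤ i ∧ i < M ∧ 0 < κ i := by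
  rw [tailSum, sum_pos_iff_of_nonneg fun i _ => Nat.cast_nonneg _]
  simp [and_assoc]

theorem tailSum_lt_iff {j : ℕ} (h : κ ≤ g) :
    tailSum M j κ < tailSum M j g ↔ ∃ i, j ≤ i ∧ i < M ∧ κ i < g i := by
  have hsub : tailSum M j (g - κ) = tailSum M j g - tailSum M j κ := by
    rw [tailSum, tailSum, tailSum, ← sum_sub_distrib]
    exact sum_congr rfl fun i _ => Nat.cast_sub (h i)
  rw [← sub_pos, ← hsub, tailSum_pos_iff]
  simp

theorem deficit_deficit (h : ∀ i, κ i ≤ stripMax l r i) : deficit l r (deficit l r κ) = κ :=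
  funext fun i => Nat.sub_sub_self (h i)

theorem deficit_le_capacity (h₁ : IsStrip l κ) (h₂ : IsStrip κ r) :
    deficit l r κ ≤ capacity l r :=
  fun i => Nat.sub_le_sub_left (stripMin_le h₁ h₂ i) _

theorem deficit_add (h₁ : IsStrip l κ) (h₂ : IsStrip κ r) (i : ℕ) :
    deficit l r κ i + κ i = stripMax l r i :=
  Nat.sub_add_cancel (le_stripMax h₁ h₂ i)

theorem IsSplit.weight_eq (h : IsSplit M l r E L q p κ) :
    weight (capacity l r) M 0 (deficit l r κ) = p - q := by
  have hsize := size_toggle h.left h.right h.support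
  have hsum : tailSum M 0 (capacity l r) + size M (toggle l κ r) =
      2 * tailSum M 0 (deficit l r κ) + size M κ := by
    rw [← tailSum_zero, ← tailSum_zero, tailSum, tailSum, tailSum, tailSum, mul_sum,
      ← sum_add_distrib, ← sum_add_distrib]
    refine sum_congr rfl fun i _ => ?_
    have := stripMin_le h.left h.right i
    have := deficit_add h.left h.right i
    have := toggle_add h.left h.right i
    simp only [capacity]
    omega
  have := h.size_left
  have := h.size_right
  rw [weight]
  omega

theorem IsSplit.size_deficit (h : IsSplit M l r E L q p κ) (hg : g ≤ deficit l r κ)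
    (hsum : tailSum M 0 g = tailSum M 0 (deficit l r κ) - 1) :
    size M (deficit l r g) = size M κ + 1 := by
  have hadd : tailSum M 0 (deficit l r g) + tailSum M 0 g =
      tailSum M 0 κ + tailSum M 0 (deficit l r κ) := by
    rw [tailSum, tailSum, tailSum, tailSum, ← sum_add_distrib, ← sum_add_distrib]
    refine sum_congr rfl fun i _ => ?_
    have := hg i
    have := deficit_add h.left h.right i
    simp only [deficit] at *
    omega
  rw [tailSum_zero, tailSum_zero M κ] at hadd
  omega

/-- Lowering the deficit moves a box from the outer to the inner strip. The condition `hpos` keeps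
the descents with `E`: the topmost box of `r / κ` does not disappear. -/
theorem IsSplit.lower (h : IsSplit M l r E L q p κ) (hp : 0 < p) (hg : g ≤ deficit l r κ)
    (hsum : tailSum M 0 g = tailSum M 0 (deficit l r κ) - 1)
    (hpos : ∀ k, (∃ i < k, 0 < deficit l r κ i) → ∃ i < k, 0 < g i) :
    IsSplit M l r E L (q + 1) (p - 1) (deficit l r g) := by
  have hadd := deficit_add h.left h.right
  have hbetween : ∀ i, stripMin l r i ≤ deficit l r g i ∧ deficit l r g i ≤ stripMax l r i := by
    intro i
    have := hg i
    have := stripMin_le h.left h.right i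
    have := hadd i
    simp only [deficit] at *
    omega
  obtain ⟨hleft, hright⟩ := isStrip_of_between hbetween
  have hsize := h.size_deficit hg hsum
  have := h.size_left
  have := h.size_right
  refine ⟨hleft, hright, h.support, by omega, by omega, fun τ hτ => ?_, fun τ hτ => ?_⟩
  · obtain ⟨i, j, hij, hi, hj⟩ := h.descends τ hτ
    have := hadd i
    rcases (stripMax_le (l := l) (r := r) i).lt_or_eq with hlt | heq
    · exact ⟨i, j, hij, (hbetween i).2.trans_lt hlt, hj⟩
    · obtain ⟨k, hkj, hk⟩ := hpos j ⟨i, hij, by omega⟩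
      have := hadd k
      have := hg k
      have hmax : stripMax l r k ≤ r k := stripMax_le k
      exact ⟨k, j, hkj, by simp only [deficit] at *; omega, hj⟩
  · obtain ⟨i, j, hij, hi, hj⟩ := h.descends_toggle τ hτ
    have := toggle_add h.left h.right i
    have := toggle_add hleft hright i
    have := hg i
    have := hadd i
    exact ⟨i, j, hij, by simp only [deficit] at *; omega, hj⟩

theorem injects_splits (l r : Shape) (E L : Set Shape) (hpq : q + 2 ≤ p) (waive : Prop) {j : ℕ}
    (hj : j ≤ M) :
    Injects
      {κ | IsSplit M l r E L q p κ ∧ IsProper (capacity l r) M waive j (deficit l r κ)}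
      {κ | IsSplit M l r E L (q + 1) (p - 1) κ ∧
        IsProper (capacity l r) M waive j (deficit l r κ)} := by
  obtain ⟨op, hinj, hop⟩ := exists_lowering (capacity l r) waive hj
  have hmem : ∀ κ, IsSplit M l r E L q p κ ∧ IsProper (capacity l r) M waive j (deficit l r κ) →
      deficit l r κ ∈ loweringDomain (capacity l r) M waive j := fun κ hκ =>
    ⟨deficit_le_capacity hκ.1.left hκ.1.right, hκ.2, by rw [hκ.1.weight_eq]; omega⟩
  have hdeficit : ∀ κ, IsSplit M l r E L q p κ ∧
      IsProper (capacity l r) M waive j (deficit l r κ) →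
      deficit l r (deficit l r (op (deficit l r κ))) = op (deficit l r κ) := fun κ hκ =>
    deficit_deficit fun i => ((hop _ (hmem κ hκ)).2.1 i).trans (Nat.sub_le _ _)
  refine ⟨fun κ => deficit l r (op (deficit l r κ)), fun κ hκ => ?_, fun κ hκ κ' hκ' heq => ?_⟩
  · obtain ⟨hproper, hle, hsum, hpos⟩ := hop _ (hmem κ hκ)
    exact ⟨hκ.1.lower (by omega) hle hsum hpos, (hdeficit κ hκ).symm ▸ hproper⟩
  · have hop_eq : op (deficit l r κ) = op (deficit l r κ') := by
      rw [← hdeficit κ hκ, ← hdeficit κ' hκ']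
      exact congrArg _ heq
    have hdef := hinj (hmem κ hκ) (hmem κ' hκ') hop_eq
    rw [← deficit_deficit (le_stripMax hκ.1.left hκ.1.right), hdef,
      deficit_deficit (le_stripMax hκ'.1.left hκ'.1.right)]

/-- `m / l` has a box strictly below row `n`. -/
def HasBoxBelow (n : ℕ) (l m : Shape) : Prop := ∃ i, n < i ∧ l i < m i

theorem HasBoxBelow.anti {m : Shape} {n k : ℕ} (h : HasBoxBelow n l m) (hk : k ≤ n) :
    HasBoxBelow k l m :=
  let ⟨i, hni, hi⟩ := h
  ⟨i, hk.trans_lt hni, hi⟩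

/-- The row of the topmost box of `m / l`; `0` if there is no box. -/
noncomputable def firstRow (l m : Shape) : ℕ := sInf {i | l i < m i}

theorem descends_iff_hasBoxBelow {m : Shape} (h : ∃ i, l i < m i) :
    Descends l m r ↔ HasBoxBelow (firstRow l m) m r := by
  constructor
  · rintro ⟨i, j, hij, hi, hj⟩
    exact ⟨j, (Nat.sInf_le (s := {i | l i < m i}) hi).trans_lt hij, hj⟩
  · rintro ⟨j, hj, hj'⟩
    exact ⟨_, j, hj, Nat.sInf_mem (s := {i | l i < m i}) h, hj'⟩

theorem hasBoxBelow_or_toggle_iff (h₁ : IsStrip l κ) (h₂ : IsStrip κ r) (n : ℕ) :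
    HasBoxBelow n l (toggle l κ r) ∨ HasBoxBelow n l κ ↔ HasBoxBelow n l (stripMax l r) := by
  have hmax := le_stripMax h₁ h₂
  have hadd := toggle_add h₁ h₂
  constructor
  · rintro (⟨i, hn, hi⟩ | ⟨i, hn, hi⟩)
    · exact ⟨i, hn, hi.trans_le (toggle_between h₁ h₂ i).2⟩
    · exact ⟨i, hn, hi.trans_le (hmax i)⟩
  · rintro ⟨i, hn, hi⟩
    by_cases hκ : l i < κ i
    · exact Or.inr ⟨i, hn, hκ⟩
    · have := hadd i
      have := stripMin_le h₁ h₂ i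
      have hmin : l i ≤ stripMin l r i := le_max_left _ _
      exact Or.inl ⟨i, hn, by omega⟩

/-- In a row where `r` reaches below `l`, both `κ` and its toggle have a box, for every `κ`;
otherwise a box of the toggle is one of the deficit, and a box of `κ` is one missing in it. -/
theorem isProper_deficit_iff (h₁ : IsStrip l κ) (h₂ : IsStrip κ r) (hr : ∀ a, M ≤ a → r a = 0)
    (n : ℕ) :
    IsProper (capacity l r) M (∃ i, n < i ∧ l i < r (i + 1)) (n + 1) (deficit l r κ) ↔
      HasBoxBelow n l (toggle l κ r) ∧ HasBoxBelow n l κ := by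
  have hdef := deficit_add h₁ h₂
  have hadd := toggle_add h₁ h₂
  have hκ := stripMin_le h₁ h₂
  have hmax : ∀ i, stripMax l r i ≤ r i := stripMax_le
  rw [IsProper, tailSum_pos_iff, tailSum_lt_iff (deficit_le_capacity h₁ h₂)]
  simp only [HasBoxBelow, capacity, Nat.succ_le_iff]
  have hmin : ∀ i, l i ≤ stripMin l r i ∧ r (i + 1) ≤ stripMin l r i ∧
      (stripMin l r i = l i ∨ l i < r (i + 1)) := fun i => by unfold stripMin; omega
  have hM : ∀ i, l i < r i → i < M := fun i hi => by
    by_contra hiM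
    rw [hr i (not_lt.1 hiM)] at hi
    omega
  constructor
  · rintro (⟨i, hn, hi⟩ | ⟨⟨i, hn, -, hi⟩, i', hn', -, hi'⟩)
    · have := hmin i
      have := hdef i
      have := hadd i
      have := hκ i
      exact ⟨⟨i, hn, by omega⟩, i, hn, by omega⟩
    · have := hmin i
      have := hdef i
      have := hadd i
      have := hmin i'
      have := hdef i'
      exact ⟨⟨i, hn, by omega⟩, i', hn', by omega⟩
  · rintro ⟨⟨i, hn, hi⟩, i', hn', hi'⟩
    by_contra! hnot
    have hi₀ := hnot.1 i hn
    have hi₀' := hnot.1 i' hn'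
    have := hmin i
    have := hdef i
    have := hadd i
    have := hmin i'
    have := hdef i'
    have := hκ i
    have := hmax i
    have := hmax i'
    have := hnot.2 ⟨i, hn, hM i (by omega), by omega⟩ i' hn' (hM i' (by omega))
    omega

theorem injects_splits_hasBoxBelow (l r : Shape) (E L : Set Shape) (hpq : q + 2 ≤ p) (n : ℕ) :
    Injects
      {κ | IsSplit M l r E L q p κ ∧ HasBoxBelow n l (toggle l κ r) ∧ HasBoxBelow n l κ}
      {κ | IsSplit M l r E L (q + 1) (p - 1) κ ∧
        HasBoxBelow n l (toggle l κ r) ∧ HasBoxBelow n l κ} := by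
  rcases le_or_gt (n + 1) M with hn | hn
  · convert injects_splits l r E L hpq (∃ i, n < i ∧ l i < r (i + 1)) hn using 3 with κ κ <;>
    exact and_congr_right fun hκ => (isProper_deficit_iff hκ.left hκ.right hκ.support n).symm
  · refine ⟨id, fun κ hκ => ?_, injOn_id _⟩
    obtain ⟨hκ, -, i, hni, hi⟩ := hκ
    have := hκ.right.eq_zero_of_le hκ.support i (by omega)
    omega

end Splits

section Halving

variable {Γ K : Type*} {Γs : Set Γ} {S S' : Set K} {st : Γ → Γ} {a b : Γ → ℕ} {A D : ℕ → K → Prop}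

open Classical in
/-- The involution that applies `st` to the first component unless `D` holds at the larger of the
two thresholds `a` and `b`. -/
noncomputable def swapUnless (st : Γ → Γ) (a b : Γ → ℕ) (D : ℕ → K → Prop) (x : Γ × K) : Γ × K :=
  (if D (max (a x.1) (b x.1)) x.2 then x.1 else st x.1, x.2)

theorem swapUnless_swapUnless (ha : ∀ C ∈ Γs, a (st C) = b C) (hb : ∀ C ∈ Γs, b (st C) = a C)
    (hst : ∀ C ∈ Γs, st (st C) = C) {x : Γ × K} (hx : x.1 ∈ Γs) :
    swapUnless st a b D (swapUnless st a b D x) = x := by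
  obtain ⟨C, κ⟩ := x
  by_cases h : D (max (a C) (b C)) κ
  · simp [swapUnless, h]
  · simp [swapUnless, h, ha C hx, hb C hx, hst C hx, max_comm (b C)]

theorem swapUnless_mapsTo (hΓs : MapsTo st Γs Γs) (ha : ∀ C ∈ Γs, a (st C) = b C)
    (hb : ∀ C ∈ Γs, b (st C) = a C) (hA : ∀ κ, Antitone fun n => A n κ)
    (hD : ∀ κ, Antitone fun n => D n κ) :
    MapsTo (swapUnless st a b D) {x ∈ Γs ×ˢ S | A (a x.1) x.2 ∧ D (b x.1) x.2}
      {x ∈ Γs ×ˢ S | (A (a x.1) x.2 ∧ D (a x.1) x.2) ∧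
        (A (max (a x.1) (b x.1)) x.2 ∨ D (max (a x.1) (b x.1)) x.2)} := by
  rintro ⟨C, κ⟩ ⟨⟨hC : C ∈ Γs, hκ : κ ∈ S⟩, hAa : A (a C) κ, hDb : D (b C) κ⟩
  by_cases h : D (max (a C) (b C)) κ
  · simp only [swapUnless, if_pos h]
    exact ⟨⟨hC, hκ⟩, ⟨hAa, hD κ (le_max_left _ _) h⟩, Or.inr h⟩
  · have hba : b C ≤ a C := by
      by_contra! hab
      rw [max_eq_right hab.le] at h
      exact h hDb
    simp only [swapUnless, if_neg h]
    refine ⟨⟨hΓs hC, hκ⟩, ?_⟩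
    simp only [ha C hC, hb C hC, max_eq_right hba]
    exact ⟨⟨hA κ hba hAa, hDb⟩, Or.inl hAa⟩

theorem swapUnless_mapsTo' (hΓs : MapsTo st Γs Γs) (ha : ∀ C ∈ Γs, a (st C) = b C)
    (hb : ∀ C ∈ Γs, b (st C) = a C) (hA : ∀ κ, Antitone fun n => A n κ)
    (hD : ∀ κ, Antitone fun n => D n κ) :
    MapsTo (swapUnless st a b D)
      {x ∈ Γs ×ˢ S | (A (a x.1) x.2 ∧ D (a x.1) x.2) ∧
        (A (max (a x.1) (b x.1)) x.2 ∨ D (max (a x.1) (b x.1)) x.2)}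
      {x ∈ Γs ×ˢ S | A (a x.1) x.2 ∧ D (b x.1) x.2} := by
  rintro ⟨C, κ⟩ ⟨⟨hC : C ∈ Γs, hκ : κ ∈ S⟩, ⟨hAa : A (a C) κ, hDa : D (a C) κ⟩, hor⟩
  by_cases h : D (max (a C) (b C)) κ
  · simp only [swapUnless, if_pos h]
    exact ⟨⟨hC, hκ⟩, hAa, hD κ (le_max_right _ _) h⟩
  · have hmax : A (max (a C) (b C)) κ := hor.resolve_right h
    simp only [swapUnless, if_neg h]
    refine ⟨⟨hΓs hC, hκ⟩, ?_⟩
    simp only [ha C hC, hb C hC]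
    exact ⟨hA κ (le_max_right _ _) hmax, hDa⟩

theorem injects_of_swap (hΓs : MapsTo st Γs Γs) (hst : ∀ C ∈ Γs, st (st C) = C)
    (ha : ∀ C ∈ Γs, a (st C) = b C) (hb : ∀ C ∈ Γs, b (st C) = a C)
    (hA : ∀ κ, Antitone fun n => A n κ) (hD : ∀ κ, Antitone fun n => D n κ)
    (h : ∀ n, Injects {κ ∈ S | A n κ ∧ D n κ} {κ ∈ S' | A n κ ∧ D n κ})
    (hor : ∀ n, ∀ κ ∈ S, A n κ ∨ D n κ → ∀ κ' ∈ S', A n κ' ∨ D n κ') :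
    Injects {x ∈ Γs ×ˢ S | A (a x.1) x.2 ∧ D (b x.1) x.2}
      {x ∈ Γs ×ˢ S' | A (a x.1) x.2 ∧ D (b x.1) x.2} := by
  refine (Injects.of_leftInvOn (swapUnless_mapsTo hΓs ha hb hA hD) fun x hx =>
    swapUnless_swapUnless ha hb hst hx.1.1).trans (Injects.trans ?_ (Injects.of_leftInvOn
      (swapUnless_mapsTo' hΓs ha hb hA hD) fun x hx => swapUnless_swapUnless ha hb hst hx.1.1))
  refine Injects.of_fibers Prod.fst Prod.fst fun C => ?_
  obtain ⟨F, hF, hFinj⟩ := h (a C)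
  refine ⟨Prod.map id F, ?_, ?_⟩
  · rintro ⟨C, κ⟩ ⟨⟨⟨hC, hκ⟩, hAD, hmax⟩, rfl⟩
    obtain ⟨hκ', hAD'⟩ := hF ⟨hκ, hAD⟩
    exact ⟨⟨⟨hC, hκ'⟩, hAD', hor _ κ hκ hmax _ hκ'⟩, rfl⟩
  · rintro ⟨C, κ⟩ ⟨⟨⟨hC, hκ⟩, hAD, -⟩, rfl⟩ ⟨C', κ'⟩ ⟨⟨⟨-, hκ'⟩, hAD', -⟩, rfl⟩ heq
    rw [Prod.ext_iff] at heq
    exact Prod.ext heq.1 (hFinj ⟨hκ, hAD⟩ ⟨hκ', hAD'⟩ heq.2)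

end Halving

section CoreMove

variable {M q p : ℕ} {W : List ℕ} {ρ lam κ : Shape} {l C : List Shape} {E L : Set Shape}

/-- The pairs `(C, κ)` for which `κ :: C` is the slide of a chain with content `q :: (W ++ [p])` and
top `ρ` satisfying the given boundary conditions, where `top C = lam`. -/
def corePairs (M : ℕ) (W : List ℕ) (q p : ℕ) (ρ lam : Shape) (E L : Set Shape) :
    Set (List Shape × Shape) :=
  {x ∈ {C | IsRibbonChain M W C ∧ top C = lam} ×ˢ {κ | IsSplit M lam ρ E L q p κ} |
    HasBoxBelow (firstRow (top (slide x.1)) (top x.1)) lam (toggle lam x.2 ρ) ∧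
      HasBoxBelow (firstRow (top x.1.tail) (top x.1)) lam x.2}

theorem IsRibbonChain.exists_lt_of_pos (h : IsRibbonChain M W C) (hW : W ≠ [])
    (hpos : ∀ x ∈ W, 0 < x) :
    (∃ i, top C.tail i < top C i) ∧ ∃ i, top (slide C) i < top C i := by
  constructor
  · obtain ⟨x, W, rfl⟩ := List.exists_cons_of_ne_nil hW
    obtain ⟨r, C, rfl⟩ := List.exists_cons_of_ne_nil (h.ne_nil hW)
    have hx := hpos x (by simp)
    have hsize : size M r = size M (top C) + x := h.hasContent.1
    exact exists_lt_of_size_lt (M := M) (by rw [List.tail_cons, top_cons]; omega)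
  · obtain ⟨x, W, rfl⟩ := List.exists_cons_of_ne_nil hW
    obtain ⟨V, y, hV⟩ : ∃ V y, x :: W = V ++ [y] :=
      ⟨_, _, (List.dropLast_append_getLast hW).symm⟩
    have hy := hpos y (by simp [hV])
    have hsize := ((hasContent_concat h.isStripChain (h.ne_nil hW) h.support).1
      (hV ▸ h.hasContent)).2
    exact exists_lt_of_size_lt (M := M) (by omega)

theorem unslide_mem_boundedChains_iff (hW : W ≠ []) (hpos : ∀ x ∈ W, 0 < x)
    (hchain : IsStripChain (κ :: C)) (hκ : IsStrip κ ρ) :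
    unslide ρ (κ :: C) ∈ boundedChains M (q :: (W ++ [p])) ρ E L ↔
      (C, κ) ∈ corePairs M W q p ρ (top C) E L := by
  have hslide := slide_unslide hchain hκ
  have htail : top (unslide ρ (κ :: C)).tail = toggle (top C) κ ρ := by
    rw [unslide, List.tail_cons, top_unslide]
  have hdesc (h : IsRibbonChain M W C) := descends_slide_cons_iff (h.ne_nil hW) hchain hκ
  simp only [boundedChains, corePairs, mem_ofPred_eq, mem_prod, ← List.cons_append,
    isRibbonChain_concat (List.cons_ne_nil q W), isRibbonChain_cons hW, hslide, htail, top_unslide,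
    top_cons]
  constructor
  · rintro ⟨⟨-, -, ⟨hstrip, hq, hC, hD, -⟩, hp, hA, hsupp⟩, -, hE, hL⟩
    obtain ⟨hb, ha⟩ := hC.exists_lt_of_pos hW hpos
    exact ⟨⟨⟨hC, trivial⟩, hstrip, hκ, hsupp, hq, hp, hE, hL⟩,
      (descends_iff_hasBoxBelow ha).1 ((hdesc hC).1 hA), (descends_iff_hasBoxBelow hb).1 hD⟩
  · rintro ⟨⟨⟨hC, -⟩, hsplit⟩, hA, hD⟩
    obtain ⟨hb, ha⟩ := hC.exists_lt_of_pos hW hpos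
    exact ⟨⟨unslide_ne_nil _ _, hchain.unslide hκ, ⟨hsplit.left, hsplit.size_left, hC,
      (descends_iff_hasBoxBelow hb).2 hD, hsplit.right.eq_zero_of_le hsplit.support⟩,
      hsplit.size_right, (hdesc hC).2 ((descends_iff_hasBoxBelow ha).2 hA), hsplit.support⟩,
      trivial, hsplit.descends, hsplit.descends_toggle⟩

theorem exists_eq_unslide_of_mem_boundedChains {x y : ℕ} {α : List ℕ}
    (h : l ∈ boundedChains M (x :: y :: α) ρ E L) :
    ∃ κ C, l = unslide ρ (κ :: C) ∧ IsStripChain (κ :: C) ∧ IsStrip κ ρ := by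
  obtain ⟨hl, rfl, -⟩ := h
  obtain ⟨r, l, rfl⟩ := List.exists_cons_of_ne_nil (hl.ne_nil (List.cons_ne_nil x _))
  have hlen := hl.length_eq
  obtain ⟨κ, C, hC⟩ := List.exists_cons_of_ne_nil
    (slide_cons_ne_nil r (l := l) (by rintro rfl; simp at hlen))
  have hslide := hl.isStripChain.slide
  have hunslide := unslide_slide hl.isStripChain (List.cons_ne_nil r l)
  rw [hC] at hslide hunslide
  exact ⟨κ, C, hunslide.symm, hslide⟩

theorem injects_fiber_corePairs (hW : W ≠ []) (hpos : ∀ x ∈ W, 0 < x) (lam : Shape) :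
    Injects {l ∈ boundedChains M (q :: (W ++ [p])) ρ E L | top (slide l).tail = lam}
      (corePairs M W q p ρ lam E L) := by
  obtain ⟨y, V, hV⟩ := List.exists_cons_of_ne_nil (l := W ++ [p]) (by simp)
  refine Injects.of_leftInvOn (F := fun l => ((slide l).tail, top (slide l)))
    (G := fun x => unslide ρ (x.2 :: x.1)) ?_ ?_
  · rintro l ⟨hl, rfl⟩
    obtain ⟨κ, C, rfl, hchain, hκ⟩ := exists_eq_unslide_of_mem_boundedChains (hV ▸ hl)
    simp only [slide_unslide hchain hκ, List.tail_cons, top_cons]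
    exact (unslide_mem_boundedChains_iff hW hpos hchain hκ).1 hl
  · rintro l ⟨hl, -⟩
    obtain ⟨κ, C, rfl, hchain, hκ⟩ := exists_eq_unslide_of_mem_boundedChains (hV ▸ hl)
    simp only [slide_unslide hchain hκ, List.tail_cons, top_cons]

theorem injects_corePairs_fiber (hW : W ≠ []) (hpos : ∀ x ∈ W, 0 < x) (lam : Shape) :
    Injects (corePairs M W q p ρ lam E L)
      {l ∈ boundedChains M (q :: (W ++ [p])) ρ E L | top (slide l).tail = lam} := by
  have hslide : ∀ x ∈ corePairs M W q p ρ lam E L, IsStripChain (x.2 :: x.1) ∧ IsStrip x.2 ρ := by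
    rintro ⟨C, κ⟩ ⟨⟨⟨hC, rfl⟩, hκ⟩, -⟩
    exact ⟨⟨hκ.left, hC.isStripChain⟩, hκ.right⟩
  refine Injects.of_leftInvOn (F := fun x => unslide ρ (x.2 :: x.1))
    (G := fun l => ((slide l).tail, top (slide l))) (fun x hx => ?_) fun x hx => ?_
  · obtain ⟨hchain, hκ⟩ := hslide x hx
    have htop : top x.1 = lam := hx.1.1.2
    refine ⟨(unslide_mem_boundedChains_iff hW hpos hchain hκ).2 (htop ▸ hx), ?_⟩
    rw [slide_unslide hchain hκ, List.tail_cons, htop]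
  · obtain ⟨hchain, hκ⟩ := hslide x hx
    simp only [slide_unslide hchain hκ, List.tail_cons, top_cons]

/-- Evacuation exchanges the two thresholds in the definition of `corePairs`. -/
theorem injects_corePairs (hW : W.reverse = W) (hpq : q + 2 ≤ p) (lam : Shape) :
    Injects (corePairs M W q p ρ lam E L) (corePairs M W (q + 1) (p - 1) ρ lam E L) := by
  refine injects_of_swap (st := evacuate)
    (a := fun C => firstRow (top (slide C)) (top C)) (b := fun C => firstRow (top C.tail) (top C))
    (A := fun n κ => HasBoxBelow n lam (toggle lam κ ρ)) (D := fun n κ => HasBoxBelow n lam κ)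
    ?_ (fun C hC => evacuate_evacuate C hC.1.isStripChain) (fun C hC => ?_) (fun C _ => ?_)
    (fun κ m n hmn h => h.anti hmn) (fun κ m n hmn h => h.anti hmn)
    (injects_splits_hasBoxBelow lam ρ E L hpq) fun n κ hκ hor κ' hκ' => ?_
  · rintro C ⟨hC, rfl⟩
    exact ⟨hW ▸ hC.evacuate, top_evacuate C⟩
  · simp only [top_slide_evacuate hC.1.isStripChain, top_evacuate]
  · simp only [top_tail_evacuate, top_evacuate]
  · rw [hasBoxBelow_or_toggle_iff hκ.left hκ.right] at hor
    rwa [hasBoxBelow_or_toggle_iff hκ'.left hκ'.right]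

theorem isRibbonChain_singleton :
    IsRibbonChain M [q] [κ] ↔ IsStrip 0 κ ∧ size M κ = q ∧ ∀ a, M ≤ a → κ a = 0 := by
  have htop : top [] = 0 := rfl
  constructor
  · rintro ⟨⟨hstrip, -⟩, ⟨hsize, -⟩, -, hsupp⟩
    rw [htop, size_zero_shape, zero_add] at hsize
    exact ⟨hstrip, hsize, hsupp⟩
  · rintro ⟨hstrip, hsize, hsupp⟩
    exact ⟨⟨hstrip, trivial⟩, ⟨by rw [htop, size_zero_shape, hsize, zero_add], trivial⟩, trivial,
      hsupp⟩

theorem unslide_mem_boundedChains_pair_iff (h₁ : IsStrip 0 κ) (h₂ : IsStrip κ ρ) :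
    unslide ρ [κ] ∈ boundedChains M [q, p] ρ E L ↔ IsSplit M 0 ρ E L q p κ ∧ 0 < ρ 1 := by
  have hchain : IsStripChain [κ] := ⟨h₁, trivial⟩
  have htail : top (unslide ρ [κ]).tail = toggle 0 κ ρ := rfl
  have hslide : top (slide [κ]) = 0 := rfl
  simp only [boundedChains, mem_ofPred_eq, show [q, p] = [q] ++ [p] from rfl,
    isRibbonChain_concat (List.cons_ne_nil q []), slide_unslide hchain h₂, htail, hslide,
    top_unslide, top_cons, isRibbonChain_singleton, descends_zero_iff h₁ h₂]
  constructor
  · rintro ⟨⟨-, -, ⟨-, hq, -⟩, hp, hρ, hsupp⟩, -, hE, hL⟩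
    exact ⟨⟨h₁, h₂, hsupp, by rw [hq, size_zero_shape, zero_add], hp, hE, hL⟩, hρ⟩
  · rintro ⟨hκ, hρ⟩
    have hq := hκ.size_left
    rw [size_zero_shape, zero_add] at hq
    exact ⟨⟨unslide_ne_nil _ _, hchain.unslide h₂, ⟨h₁, hq, h₂.eq_zero_of_le hκ.support⟩,
      hκ.size_right, hρ, hκ.support⟩, trivial, hκ.descends, hκ.descends_toggle⟩

theorem injects_boundedChains_pair (hpq : q + 2 ≤ p) :
    Injects (boundedChains M [q, p] ρ E L) (boundedChains M [q + 1, p - 1] ρ E L) := by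
  obtain ⟨F, hF, hFinj⟩ := injects_splits (M := M) 0 ρ E L hpq True M.zero_le
  simp only [IsProper, true_or, and_true] at hF hFinj
  have hdecode : ∀ l ∈ boundedChains M [q, p] ρ E L,
      ∃ κ, l = unslide ρ [κ] ∧ slide l = [κ] ∧ IsSplit M 0 ρ E L q p κ ∧ 0 < ρ 1 := by
    intro l hl
    obtain ⟨κ, C, rfl, hchain, hκ⟩ := exists_eq_unslide_of_mem_boundedChains hl
    obtain rfl : C = [] := by simpa [length_unslide] using hl.1.length_eq
    exact ⟨κ, rfl, slide_unslide hchain hκ,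
      (unslide_mem_boundedChains_pair_iff hchain.1 hκ).1 hl⟩
  refine ⟨fun l => unslide ρ [F (top (slide l))], fun l hl => ?_, fun l hl l' hl' heq => ?_⟩
  · obtain ⟨κ, -, hslide, hκ, hρ⟩ := hdecode l hl
    simp only [hslide, top_cons]
    have hFκ : IsSplit M 0 ρ E L (q + 1) (p - 1) (F κ) := hF hκ
    exact (unslide_mem_boundedChains_pair_iff hFκ.left hFκ.right).2 ⟨hFκ, hρ⟩
  · obtain ⟨κ, rfl, hslide, hκ, -⟩ := hdecode l hl
    obtain ⟨κ', rfl, hslide', hκ', -⟩ := hdecode l' hl'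
    have hFκ : IsSplit M 0 ρ E L (q + 1) (p - 1) (F κ) := hF hκ
    have hFκ' : IsSplit M 0 ρ E L (q + 1) (p - 1) (F κ') := hF hκ'
    have hs := congrArg slide heq
    simp only [hslide, hslide', top_cons] at hs
    have hchain : IsStripChain [F κ] := ⟨hFκ.left, trivial⟩
    have hchain' : IsStripChain [F κ'] := ⟨hFκ'.left, trivial⟩
    rw [slide_unslide hchain hFκ.right, slide_unslide hchain' hFκ'.right] at hs
    rw [hFinj hκ hκ' (List.head_eq_of_cons_eq hs)]

theorem ChainLE.of_palindrome (hpos : ∀ x ∈ W, 0 < x) (hW : W.reverse = W) (hpq : q + 2 ≤ p) :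
    ChainLE M (q :: (W ++ [p])) ((q + 1) :: (W ++ [p - 1])) := by
  intro ρ E L _ _
  rcases eq_or_ne W [] with rfl | hne
  · exact injects_boundedChains_pair hpq
  · exact Injects.of_fibers (fun l => top (slide l).tail) (fun l => top (slide l).tail) fun lam =>
      ((injects_fiber_corePairs hne hpos lam).trans (injects_corePairs hW hpq lam)).trans
        (injects_corePairs_fiber hne hpos lam)

end CoreMove

section RowMove

variable {α β : List ℕ} {M t y u v u' v' : ℕ} {ρ r : Shape}

theorem ChainLE.of_palindrome_reverse {W : List ℕ} {q p : ℕ} (hpos : ∀ x ∈ W, 0 < x)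
    (hW : W.reverse = W) (hpq : q + 2 ≤ p) :
    ChainLE M (p :: (W ++ [q])) ((p - 1) :: (W ++ [q + 1])) := by
  simpa [hW] using (ChainLE.of_palindrome (M := M) hpos hW hpq).reverse

theorem ChainLE.in_context {W : List ℕ} (h : ChainLE M (u :: (W ++ [v])) (u' :: (W ++ [v'])))
    (Y X : List ℕ) : ChainLE M (Y ++ u :: (W ++ v :: X)) (Y ++ u' :: (W ++ v' :: X)) := by
  simpa using (h.append_right (by simp) (by simp) X).append_left (by simp) (by simp) Y

/-- Two entries that differ by at least `2` and are as close together as possible enclose a constant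
list. -/
theorem exists_palindrome_between (W Y X : List ℕ) (huv : u + 2 ≤ v ∨ v + 2 ≤ u) :
    ∃ (Y' W' X' : List ℕ) (u' v' : ℕ), Y ++ u :: (W ++ v :: X) = Y' ++ u' :: (W' ++ v' :: X') ∧
      (u' + 2 ≤ v' ∨ v' + 2 ≤ u') ∧ W'.reverse = W' := by
  induction hn : W.length using Nat.strong_induction_on generalizing W Y X u v with
  | _ n ih =>
  subst hn
  by_cases h : ∃ w ∈ W, (u + 2 ≤ w ∨ w + 2 ≤ u) ∨ w + 2 ≤ v ∨ v + 2 ≤ w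
  · obtain ⟨w, hw, hwuv⟩ := h
    obtain ⟨W₁, W₂, rfl⟩ := List.append_of_mem hw
    rcases hwuv with huw | hwv
    · simpa using ih W₁.length (by simp) W₁ Y (W₂ ++ v :: X) huw rfl
    · simpa using ih W₂.length (by simp; omega) W₂ (Y ++ u :: W₁) X hwv rfl
  · push Not at h
    have hconst : W = List.replicate W.length (min u v + 1) :=
      List.eq_replicate_iff.2 ⟨rfl, fun w hw => by have := h w hw; omega⟩
    exact ⟨Y, W, X, u, v, rfl, huv, by rw [hconst, List.reverse_replicate]⟩

theorem exists_append_of_add_two_le (hu : u ∈ α) (hv : v ∈ α) (huv : u + 2 ≤ v) :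
    ∃ (Y W X : List ℕ) (u v : ℕ), α = Y ++ u :: (W ++ v :: X) ∧ (u + 2 ≤ v ∨ v + 2 ≤ u) := by
  obtain ⟨S, T, rfl⟩ := List.append_of_mem hu
  rcases List.mem_append.1 hv with hv | hv
  · obtain ⟨S₁, S₂, rfl⟩ := List.append_of_mem hv
    exact ⟨S₁, S₂, T, v, u, by simp, Or.inr huv⟩
  · obtain ⟨T₁, T₂, rfl⟩ := List.append_of_mem ((List.mem_cons.1 hv).resolve_left (by omega))
    exact ⟨S, T₁, T₂, u, v, by simp, Or.inl huv⟩

/-- The part of `α` that exceeds `t`. -/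
def excess (t : ℕ) (α : List ℕ) : ℕ := (α.map (· - t)).sum

theorem excess_cons (t y : ℕ) (α : List ℕ) : excess t (y :: α) = y - t + excess t α := by
  simp [excess]

theorem exists_chainLE_excess_lt (hpos : ∀ x ∈ α, 0 < x) (h : ∃ u ∈ α, ∃ v ∈ α, u + 2 ≤ v) :
    ∃ β : List ℕ, (∀ x ∈ β, 0 < x) ∧ β.sum = α.sum ∧ (∀ M, ChainLE M α β) ∧
      ∃ t, excess t β < excess t α := by
  obtain ⟨u, hu, v, hv, huv⟩ := h
  obtain ⟨Y, W, X, u, v, rfl, huv⟩ := exists_append_of_add_two_le hu hv huv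
  obtain ⟨Y, W, X, u, v, heq, huv, hW⟩ := exists_palindrome_between W Y X huv
  rw [heq] at hpos ⊢
  have hWpos : ∀ x ∈ W, 0 < x := fun x hx => hpos x (by simp [hx])
  have key : ∀ u' v', 0 < u' ∧ u' < max u v → 0 < v' ∧ v' < max u v → u' + v' = u + v →
      (∀ M, ChainLE M (u :: (W ++ [v])) (u' :: (W ++ [v']))) →
      ∃ β : List ℕ, (∀ x ∈ β, 0 < x) ∧ β.sum = (Y ++ u :: (W ++ v :: X)).sum ∧
        (∀ M, ChainLE M (Y ++ u :: (W ++ v :: X)) β) ∧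
        ∃ t, excess t β < excess t (Y ++ u :: (W ++ v :: X)) := by
    intro u' v' hu' hv' hsum hle
    refine ⟨Y ++ u' :: (W ++ v' :: X), fun x hx => ?_, ?_, fun M => (hle M).in_context Y X,
      max u v - 1, ?_⟩
    · simp only [List.mem_append, List.mem_cons] at hx hpos
      rcases hx with hx | rfl | hx | rfl | hx
      exacts [hpos x (by simp [hx]), hu'.1, hWpos x hx, hv'.1, hpos x (by simp [hx])]
    · simp only [List.sum_append, List.sum_cons]
      omega
    · simp only [excess, List.map_append, List.map_cons, List.sum_append, List.sum_cons]
      omega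
  have hu := hpos u (by simp)
  have hv := hpos v (by simp)
  rcases huv with huv | huv
  · exact key (u + 1) (v - 1) (by omega) (by omega) (by omega) fun M => .of_palindrome hWpos hW huv
  · exact key (u - 1) (v + 1) (by omega) (by omega) (by omega)
      fun M => .of_palindrome_reverse hWpos hW huv

theorem size_add_le_of_isStrip (h : IsStrip ρ r) (k n : ℕ) :
    size (k + 1 + n) r + size k ρ ≤ size (k + 1) r + size (k + n) ρ := by
  induction n with
  | zero => simp
  | succ n ih =>
    have := (h (k + n)).2
    rw [← add_assoc, size_succ (k + 1 + n), ← add_assoc, size_succ (k + n)]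
    rw [add_right_comm] at this
    omega

theorem size_eq_size_of_le {K : ℕ} (h : ∀ a, M ≤ a → r a = 0) (hK : M ≤ K) :
    size K r = size M r := by
  refine (sum_subset (by simpa using hK) fun a _ ha => h a ?_).symm
  simpa using ha

/-- Each strip with more than `t` boxes contributes at least `t` boxes and its excess to the first
rows of the top shape, since a strip has no two boxes in a column. -/
theorem HasContent.le_size (t : ℕ) : ∀ {α : List ℕ} {l : List Shape}, IsStripChain l →
    HasContent M α l → (∀ a, M ≤ a → top l a = 0) →
    α.countP (t < ·) * t + excess t α ≤ size (α.countP (t < ·)) (top l)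
  | [], _, _, _, _ => by simp [excess]
  | y :: α, r :: l, ⟨hr, hl⟩, ⟨hy, hcontent⟩, hsupp => by
    have hsupp' := hr.eq_zero_of_le hsupp
    have ih := HasContent.le_size t hl hcontent hsupp'
    rw [excess_cons, top_cons]
    rw [top_cons] at hsupp
    by_cases hty : t < y
    · rw [List.countP_cons_of_pos (by simpa using hty), add_mul]
      set k := α.countP (t < ·)
      have hsize := size_add_le_of_isStrip hr k M
      rw [size_eq_size_of_le hsupp (K := k + 1 + M) (by omega),
        size_eq_size_of_le hsupp' (K := k + M) (by omega)] at hsize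
      omega
    · rw [List.countP_cons_of_neg (by simpa using hty)]
      have hle : size (α.countP (t < ·)) (top l) ≤ size (α.countP (t < ·)) r :=
        sum_le_sum fun a _ => (hr a).1
      omega

/-- The partition that arises from `ρ` by inserting a part `y`. -/
def insertPart (y : ℕ) (ρ : Shape) : Shape
  | 0 => max (ρ 0) y
  | a + 1 => max (ρ (a + 1)) (min y (ρ a))

/-- The partition with parts `β`. -/
def keyShape : List ℕ → Shape
  | [] => 0
  | y :: β => insertPart y (keyShape β)

/-- The partitions whose parts are the suffixes of `β`: a key tableau. -/
def keyChain : List ℕ → List Shape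
  | [] => []
  | y :: β => keyShape (y :: β) :: keyChain β

theorem top_keyChain (β : List ℕ) : top (keyChain β) = keyShape β := by cases β <;> rfl

theorem keyShape_succ_le : ∀ (β : List ℕ) (a : ℕ), keyShape β (a + 1) ≤ keyShape β a
  | [], _ => le_rfl
  | y :: β, 0 => by
    have := keyShape_succ_le β 0
    simp only [keyShape, insertPart]
    omega
  | y :: β, a + 1 => by
    have := keyShape_succ_le β (a + 1)
    have := keyShape_succ_le β a
    simp only [keyShape, insertPart]
    omega

theorem isStrip_keyShape_cons (y : ℕ) (β : List ℕ) : IsStrip (keyShape β) (keyShape (y :: β)) := by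
  intro a
  have := keyShape_succ_le β a
  cases a <;> simp only [keyShape, insertPart] <;> omega

theorem keyShape_eq_zero : ∀ (β : List ℕ) (a : ℕ), β.length ≤ a → keyShape β a = 0
  | [], _, _ => rfl
  | y :: β, a + 1, h => by
    have := keyShape_eq_zero β (a + 1) (by simp at h; omega)
    have := keyShape_eq_zero β a (by simp at h; omega)
    simp only [keyShape, insertPart]
    omega

theorem keyShape_pos : ∀ (β : List ℕ), (∀ x ∈ β, 0 < x) → ∀ a < β.length, 0 < keyShape β a
  | y :: β, hpos, 0, _ => by
    have := hpos y (by simp)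
    simp only [keyShape, insertPart]
    omega
  | y :: β, hpos, a + 1, h => by
    have := hpos y (by simp)
    have := keyShape_pos β (fun x hx => hpos x (by simp [hx])) a (by simpa using h)
    simp only [keyShape, insertPart]
    omega

theorem size_succ_keyShape_cons (y : ℕ) (β : List ℕ) (k : ℕ) :
    size (k + 1) (keyShape (y :: β)) = size k (keyShape β) + max (keyShape β k) y := by
  induction k with
  | zero => simp [size, keyShape, insertPart]
  | succ k ih =>
    have := keyShape_succ_le β k
    rw [size_succ, ih, size_succ]
    simp only [keyShape, insertPart]
    omega

theorem size_keyShape_le (t : ℕ) : ∀ (β : List ℕ) (k : ℕ), size k (keyShape β) ≤ k * t + excess t β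
  | [], k => by simp [size, keyShape]
  | y :: β, 0 => by simp [size]
  | y :: β, k + 1 => by
    have h₁ := size_keyShape_le t β k
    have h₂ := size_keyShape_le t β (k + 1)
    rw [size_succ] at h₂
    rw [size_succ_keyShape_cons, excess_cons]
    rw [add_mul] at *
    omega

theorem isStripChain_keyChain : ∀ β, IsStripChain (keyChain β)
  | [] => trivial
  | y :: β => ⟨top_keyChain β ▸ isStrip_keyShape_cons y β, isStripChain_keyChain β⟩

theorem hasContent_keyChain : ∀ {β : List ℕ}, β.length ≤ M → HasContent M β (keyChain β)
  | [], _ => trivial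
  | y :: β, h => by
    rw [List.length_cons] at h
    refine ⟨?_, hasContent_keyChain (by omega)⟩
    obtain ⟨K, rfl⟩ : ∃ K, M = K + 1 := ⟨M - 1, by omega⟩
    rw [top_keyChain, size_succ_keyShape_cons, size_succ, keyShape_eq_zero β K (by omega)]
    simp

theorem allDescend_keyChain : ∀ {β : List ℕ}, (∀ x ∈ β, 0 < x) → AllDescend (keyChain β)
  | [], _ => trivial
  | [_], _ => trivial
  | y :: x :: β, hpos => by
    have hpos' : ∀ z ∈ x :: β, 0 < z := fun z hz => hpos z (by simp [hz])
    refine ⟨⟨β.length, β.length + 1, by omega, ?_, ?_⟩, allDescend_keyChain hpos'⟩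
    · rw [top_keyChain, keyShape_eq_zero β _ le_rfl]
      exact keyShape_pos _ hpos' _ (by simp)
    · rw [keyShape_eq_zero (x :: β) _ (by simp)]
      exact keyShape_pos _ hpos _ (by simp)

theorem isRibbonChain_keyChain (hpos : ∀ x ∈ β, 0 < x) (hM : β.length ≤ M) :
    IsRibbonChain M β (keyChain β) :=
  ⟨isStripChain_keyChain β, hasContent_keyChain hM, allDescend_keyChain hpos, fun a ha => by
    rw [top_keyChain, keyShape_eq_zero β a (hM.trans ha)]⟩

theorem top_ne_top_keyChain_of_excess_lt {l : List Shape} (h : excess t β < excess t α)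
    (hl : IsRibbonChain M α l) : top l ≠ top (keyChain β) := by
  intro heq
  have hge := HasContent.le_size t hl.isStripChain hl.hasContent hl.support
  have hle := size_keyShape_le t β (α.countP (t < ·))
  rw [heq, top_keyChain] at hge
  omega

theorem ChainLE.injects (h : ChainLE M α β) (ρ : Shape) :
    Injects {l | IsRibbonChain M α l ∧ top l = ρ} {l | IsRibbonChain M β l ∧ top l = ρ} := by
  simpa [boundedChains] using h ρ ∅ ∅ (by simp) (by simp)

theorem exists_injects_ribbonChains (hpos : ∀ x ∈ α, 0 < x) (h : ∃ u ∈ α, ∃ v ∈ α, u + 2 ≤ v) :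
    ∃ β : List ℕ, (∀ x ∈ β, 0 < x) ∧ β.sum = α.sum ∧
      (∀ M ρ, Injects {l | IsRibbonChain M α l ∧ top l = ρ}
        {l | IsRibbonChain M β l ∧ top l = ρ}) ∧
      ∀ M, β.sum ≤ M → ∃ l, IsRibbonChain M β l ∧ ∀ l', IsRibbonChain M α l' → top l' ≠ top l := by
  obtain ⟨β, hβ, hsum, hle, t, ht⟩ := exists_chainLE_excess_lt hpos h
  exact ⟨β, hβ, hsum, fun M => (hle M).injects, fun M hM => ⟨keyChain β,
    isRibbonChain_keyChain hβ ((List.length_le_sum_of_one_le β hβ).trans hM),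
    fun l hl => top_ne_top_keyChain_of_excess_lt ht hl⟩⟩

end RowMove

section Words

variable {w w' : ℕ → ℕ} {M a b k m n s y : ℕ} {r : Shape} {l : List Shape} {α : List ℕ}

/-- The partition whose row `a` is the number of letters `a` among the first `n` letters of `w`. -/
def wordShape (w : ℕ → ℕ) (n : ℕ) : Shape := fun a => Nat.count (w · = a) n

theorem wordShape_zero (w : ℕ → ℕ) : wordShape w 0 = 0 := rfl

theorem wordShape_succ (w : ℕ → ℕ) (n a : ℕ) :
    wordShape w (n + 1) a = wordShape w n a + if w n = a then 1 else 0 :=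
  Nat.count_succ _ _

theorem wordShape_mono (w : ℕ → ℕ) (h : m ≤ n) (a : ℕ) : wordShape w m a ≤ wordShape w n a :=
  Nat.count_monotone _ h

theorem wordShape_congr (h : EqOn w w' (Set.Iio n)) : wordShape w n = wordShape w' n := by
  induction n with
  | zero => rfl
  | succ n ih =>
    ext a
    rw [wordShape_succ, wordShape_succ, ih (h.mono fun k (hk : k < n) => hk.trans n.lt_succ_self),
      h n.lt_succ_self]

theorem wordShape_lt_iff : wordShape w m a < wordShape w n a ↔ ∃ k ∈ Set.Ico m n, w k = a :=
  ⟨Nat.exists_of_count_lt_count, fun ⟨_, hk, hka⟩ =>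
    (wordShape_mono w hk.1 a).trans_lt (Nat.count_strict_mono hka hk.2)⟩

theorem wordShape_pos_iff : 0 < wordShape w n a ↔ ∃ k < n, w k = a := by
  simpa [wordShape_zero] using wordShape_lt_iff (w := w) (m := 0) (n := n) (a := a)

theorem size_wordShape (h : ∀ k < n, w k < M) : size M (wordShape w n) = n := by
  simp only [size, wordShape, Nat.count_eq_card_filter_range]
  rw [← card_eq_sum_card_fiberwise fun k hk => by simpa using h k (by simpa using hk), card_range]

theorem letter_le_of_antitone (h : ∀ m ≤ n, Antitone (wordShape w m)) (hk : k < n) : w k ≤ k := by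
  induction k using Nat.strong_induction_on with
  | _ k ih =>
  cases hwk : w k with
  | zero => exact Nat.zero_le k
  | succ b =>
    have hpos := (wordShape_pos_iff.2 ⟨k, k.lt_succ_self, hwk⟩).trans_le (h (k + 1) hk b.le_succ)
    obtain ⟨j, hj, hwj⟩ := wordShape_pos_iff.1 hpos
    have hjk : j ≠ k := by
      rintro rfl
      omega
    have := ih j (by omega) (by omega)
    omega

theorem wordShape_eq_zero (h : ∀ m ≤ n, Antitone (wordShape w m)) (ha : n ≤ a) :
    wordShape w n a = 0 :=
  Nat.eq_zero_of_not_pos fun hpos => by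
    obtain ⟨k, hk, rfl⟩ := wordShape_pos_iff.1 hpos
    have := letter_le_of_antitone h hk
    omega

section Rows

theorem isStrip_wordShape (hsn : s ≤ n) (hw : AntitoneOn w (Set.Ico s n))
    (h : ∀ m ≤ n, Antitone (wordShape w m)) : IsStrip (wordShape w s) (wordShape w n) := by
  induction n, hsn using Nat.le_induction with
  | base => exact fun a => ⟨le_rfl, h s le_rfl (Nat.le_add_right a 1)⟩
  | succ n hsn ih =>
    have ih := ih (hw.mono (Set.Ico_subset_Ico_right n.le_succ)) fun m hm => h m (by omega)
    refine fun a => ⟨wordShape_mono w (by omega) a, ?_⟩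
    rw [wordShape_succ]
    split_ifs with hwn
    · have hconst : wordShape w (n + 1) a ≤ wordShape w s a := by
        rw [← not_lt, wordShape_lt_iff]
        rintro ⟨k, hk, hka⟩
        have := hw hk ⟨hsn, n.lt_succ_self⟩ (Nat.le_of_lt_succ hk.2)
        omega
      have := h (n + 1) le_rfl (Nat.le_add_right a 1)
      rw [wordShape_succ, if_pos hwn] at this
      omega
    · exact (ih a).2

theorem isLeast_last_letter (hsn : s ≤ n) (hw : AntitoneOn w (Set.Ico s (n + 1))) :
    IsLeast {a | wordShape w s a < wordShape w (n + 1) a} (w n) := by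
  refine ⟨wordShape_lt_iff.2 ⟨n, ⟨hsn, n.lt_succ_self⟩, rfl⟩, fun a ha => ?_⟩
  obtain ⟨k, hk, rfl⟩ := wordShape_lt_iff.1 ha
  exact hw hk ⟨hsn, n.lt_succ_self⟩ (Nat.le_of_lt_succ hk.2)

theorem eqOn_row (hsn : s ≤ n) (hs : wordShape w s = wordShape w' s)
    (hw : AntitoneOn w (Set.Ico s n)) (hw' : AntitoneOn w' (Set.Ico s n))
    (hn : wordShape w n = wordShape w' n) : EqOn w w' (Set.Ico s n) := by
  induction n, hsn using Nat.le_induction with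
  | base => simp
  | succ n hsn ih =>
    have hlast : w n = w' n :=
      (isLeast_last_letter hsn hw).unique (hs ▸ hn ▸ isLeast_last_letter hsn hw')
    have hn' : wordShape w n = wordShape w' n := by
      ext a
      have := congrFun hn a
      rw [wordShape_succ, wordShape_succ, hlast] at this
      omega
    have hsub : Set.Ico s n ⊆ Set.Ico s (n + 1) := Set.Ico_subset_Ico_right n.le_succ
    intro k hk
    rcases (Nat.le_of_lt_succ hk.2).lt_or_eq with hkn | rfl
    · exact ih (hw.mono hsub) (hw'.mono hsub) hn' ⟨hk.1, hkn⟩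
    · exact hlast

theorem antitoneOn_update (hw : AntitoneOn w (Set.Ico s n)) (hb : ∀ k ∈ Set.Ico s n, b ≤ w k) :
    AntitoneOn (update w n b) (Set.Ico s (n + 1)) := by
  rintro k ⟨hsk, hk⟩ k' ⟨hsk', hk'⟩ hkk'
  rcases (Nat.le_of_lt_succ hk).lt_or_eq with hkn | rfl
  · rw [update_of_ne hkn.ne]
    rcases (Nat.le_of_lt_succ hk').lt_or_eq with hkn' | rfl
    · rw [update_of_ne hkn'.ne]
      exact hw ⟨hsk, hkn⟩ ⟨hsk', hkn'⟩ hkk'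
    · rw [update_self]
      exact hb k ⟨hsk, hkn⟩
  · rw [hkk'.antisymm (Nat.le_of_lt_succ hk')]

theorem eqOn_update (w : ℕ → ℕ) (n b : ℕ) : EqOn (update w n b) w (Set.Iio n) :=
  fun _ hk => update_of_ne (ne_of_lt hk) _ _

theorem wordShape_update (w : ℕ → ℕ) (n b a : ℕ) :
    wordShape (update w n b) (n + 1) a = wordShape w n a + if b = a then 1 else 0 := by
  rw [wordShape_succ, update_self, wordShape_congr (eqOn_update w n b)]

/-- The row is filled from its end: the last letter is the first row in which the shapes differ. -/
theorem exists_row (y : ℕ) (hle : ∀ a, wordShape w s a ≤ r a)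
    (hsize : size M r = size M (wordShape w s) + y) (hsupp : ∀ a, M ≤ a → r a = 0) :
    ∃ w', EqOn w' w (Set.Iio s) ∧ AntitoneOn w' (Set.Ico s (s + y)) ∧ wordShape w' (s + y) = r := by
  induction y generalizing r with
  | zero =>
    refine ⟨w, fun _ _ => rfl, by simp [AntitoneOn], funext fun a => ?_⟩
    rcases lt_or_ge a M with ha | ha
    · exact (Finset.sum_eq_sum_iff_of_le (s := range M) fun i _ => hle i).1 hsize.symm a
        (by simpa using ha)
    · exact (hle a).antisymm (by rw [hsupp a ha]; exact Nat.zero_le _)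
  | succ y ih =>
    have hne : {a | wordShape w s a < r a}.Nonempty := exists_lt_of_size_lt (M := M) (by omega)
    set b := sInf {a | wordShape w s a < r a}
    have hb : wordShape w s b < r b := Nat.sInf_mem hne
    have hbM : b ∈ range M := mem_range.2 <| not_le.1 fun h => by
      have := hsupp b h
      omega
    obtain ⟨w', heq, hanti, hshape⟩ := ih (r := update r b (r b - 1))
      (le_update_iff.2 ⟨Nat.le_sub_one_of_lt hb, fun a _ => hle a⟩)
      (by
        have := add_sum_erase (range M) r hbM
        rw [size, sum_update_of_mem hbM, sdiff_singleton_eq_erase]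
        rw [size, ← this] at hsize
        omega)
      (fun a ha => by rw [update_of_ne (by rintro rfl; simp at hbM; omega), hsupp a ha])
    have hupdate : update r b (r b - 1) ≤ r := update_le_iff.2 ⟨Nat.sub_le _ _, fun _ _ => le_rfl⟩
    refine ⟨update w' (s + y) b, fun k hk => ?_, antitoneOn_update hanti fun k hk => ?_,
      funext fun a => ?_⟩
    · rw [eqOn_update w' _ _ (lt_of_lt_of_le hk (Nat.le_add_right s y)), heq hk]
    · have hrow := wordShape_lt_iff (w := w').2 ⟨k, hk, rfl⟩
      rw [hshape, wordShape_congr heq] at hrow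
      exact Nat.sInf_le (hrow.trans_le (hupdate (w' k)))
    · rw [← add_assoc, wordShape_update, hshape]
      rcases eq_or_ne b a with rfl | hba
      · rw [update_self, if_pos rfl]
        omega
      · rw [update_of_ne hba.symm, if_neg hba, add_zero]

theorem descends_wordShape_iff (hsm : s ≤ m) (hmn : m + 1 < n)
    (h₁ : AntitoneOn w (Set.Ico s (m + 1))) (h₂ : AntitoneOn w (Set.Ico (m + 1) n)) :
    Descends (wordShape w s) (wordShape w (m + 1)) (wordShape w n) ↔ w m < w (m + 1) := by
  constructor
  · rintro ⟨i, j, hij, hi, hj⟩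
    obtain ⟨k, hk, rfl⟩ := wordShape_lt_iff.1 hi
    obtain ⟨k', hk', rfl⟩ := wordShape_lt_iff.1 hj
    have := h₁ hk ⟨hsm, m.lt_succ_self⟩ (Nat.le_of_lt_succ hk.2)
    have := h₂ ⟨le_rfl, hmn⟩ hk' hk'.1
    omega
  · intro h
    exact ⟨w m, w (m + 1), h, wordShape_lt_iff.2 ⟨m, ⟨hsm, m.lt_succ_self⟩, rfl⟩,
      wordShape_lt_iff.2 ⟨m + 1, ⟨le_rfl, hmn⟩, rfl⟩⟩

end Rows

/-- The first `n` letters of `w` form the reverse reading word, with letters starting at `0`, of a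
Littlewood–Richardson filling of a ribbon in which the box `k + 1` is below the box `k` exactly if
`k ∈ S`. -/
structure IsLatticeWord (n : ℕ) (S : Set ℕ) (w : ℕ → ℕ) : Prop where
  antitone : ∀ m ≤ n, Antitone (wordShape w m)
  lt_succ_iff : ∀ k, k + 1 < n → (w k < w (k + 1) ↔ k ∈ S)

theorem IsLatticeWord.congr {S : Set ℕ} (h : IsLatticeWord n S w) (hww' : EqOn w' w (Set.Iio n)) :
    IsLatticeWord n S w' where
  antitone m hm := by
    rw [wordShape_congr (hww'.mono (Set.Iio_subset_Iio hm))]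
    exact h.antitone m hm
  lt_succ_iff k hk := by
    rw [hww' (show k < n by omega), hww' hk, h.lt_succ_iff k hk]

/-- The positions at which the rows of a ribbon with row lengths `α`, bottom row first, end. -/
def rowEnds : List ℕ → Set ℕ
  | [] => ∅
  | _ :: α => {k | k + 1 = α.sum} ∪ rowEnds α

theorem succ_lt_sum_of_mem_rowEnds : ∀ {α : List ℕ}, (∀ x ∈ α, 0 < x) → k ∈ rowEnds α →
    k + 1 < α.sum
  | y :: α, hpos, h => by
    have hy := hpos y (by simp)
    rw [List.sum_cons]
    rcases h with h | h
    · have : k + 1 = α.sum := h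
      omega
    · have := succ_lt_sum_of_mem_rowEnds (fun x hx => hpos x (by simp [hx])) h
      omega

theorem isLatticeWord_cons_iff (hy : 0 < y) (hpos : ∀ x ∈ α, 0 < x) :
    IsLatticeWord (y :: α).sum (rowEnds (y :: α)) w ↔
      IsLatticeWord α.sum (rowEnds α) w ∧ AntitoneOn w (Set.Ico α.sum (y :: α).sum) ∧
        IsStrip (wordShape w α.sum) (wordShape w (y :: α).sum) ∧
        ∀ k, k + 1 = α.sum → w k < w (k + 1) := by
  have hsum : (y :: α).sum = α.sum + y := by rw [List.sum_cons, add_comm]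
  have hends : ∀ k, k ∈ rowEnds (y :: α) ↔ k + 1 = α.sum ∨ k ∈ rowEnds α := fun k => Iff.rfl
  have hlt : ∀ {k}, k ∈ rowEnds α → k + 1 < α.sum := succ_lt_sum_of_mem_rowEnds hpos
  rw [hsum]
  constructor
  · intro h
    have hanti : AntitoneOn w (Set.Ico α.sum (α.sum + y)) := by
      refine antitoneOn_of_succ_le Set.ordConnected_Ico fun k _ hk hk' => not_lt.1 fun hlt' => ?_
      have hk1 : k + 1 < α.sum + y := hk'.2
      rcases (hends k).1 ((h.lt_succ_iff k hk1).1 hlt') with h | h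
      · exact (hk.1.trans_lt (by omega : k < α.sum)).false
      · have := hlt h
        exact (hk.1.trans_lt (by omega : k < α.sum)).false
    refine ⟨⟨fun m hm => h.antitone m (by omega), fun k hk => ?_⟩, hanti,
      isStrip_wordShape (Nat.le_add_right _ _) hanti h.antitone, fun k hk => ?_⟩
    · rw [h.lt_succ_iff k (by omega), hends, or_iff_right (by omega)]
    · exact (h.lt_succ_iff k (by omega)).2 (Or.inl hk)
  · rintro ⟨h, hanti, hstrip, hjump⟩
    refine ⟨fun m hm => ?_, fun k hk => ?_⟩
    · rcases le_total m α.sum with hmα | hmα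
      · exact h.antitone m hmα
      · exact antitone_nat_of_succ_le fun a => ((wordShape_mono w hm (a + 1)).trans
          (hstrip a).2).trans (wordShape_mono w hmα a)
    · rw [hends]
      rcases lt_trichotomy (k + 1) α.sum with hkα | hkα | hkα
      · rw [h.lt_succ_iff k hkα, or_iff_right (by omega)]
      · exact iff_of_true (hjump k hkα) (Or.inl hkα)
      · refine iff_of_false (hanti ⟨by omega, by omega⟩ ⟨by omega, hk⟩ k.le_succ).not_gt ?_
        rintro (h | h)
        · omega
        · have := hlt h
          omega

/-- The chain of the shapes of the prefixes of `w` that consist of complete rows. -/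
def wordChain (w : ℕ → ℕ) : List ℕ → List Shape
  | [] => []
  | y :: α => wordShape w (y :: α).sum :: wordChain w α

theorem top_wordChain (w : ℕ → ℕ) (α : List ℕ) : top (wordChain w α) = wordShape w α.sum := by
  cases α <;> rfl

theorem wordChain_congr : ∀ {α : List ℕ}, EqOn w w' (Set.Iio α.sum) →
    wordChain w α = wordChain w' α
  | [], _ => rfl
  | y :: α, h => by
    rw [wordChain, wordChain, wordShape_congr h,
      wordChain_congr (h.mono (Set.Iio_subset_Iio (by simp)))]

theorem IsRibbonChain.of_cons (h : IsRibbonChain M (y :: α) (r :: l)) : IsRibbonChain M α l where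
  isStripChain := h.isStripChain.2
  hasContent := h.hasContent.2
  allDescend := by
    cases l with
    | nil => trivial
    | cons m l => exact h.allDescend.2
  support := h.isStripChain.1.eq_zero_of_le h.support

theorem IsLatticeWord.descends_iff (hy : 0 < y) (hpos : ∀ x ∈ α, 0 < x)
    (h : IsLatticeWord (y :: α).sum (rowEnds (y :: α)) w)
    (hanti : AntitoneOn w (Set.Ico (y :: α).sum n)) (hk : k + 1 = (y :: α).sum) (hkn : k + 1 < n) :
    Descends (wordShape w α.sum) (wordShape w (y :: α).sum) (wordShape w n) ↔ w k < w (k + 1) := by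
  have hrow := ((isLatticeWord_cons_iff hy hpos).1 h).2.1
  rw [← hk] at hrow hanti ⊢
  refine descends_wordShape_iff ?_ hkn hrow hanti
  rw [List.sum_cons] at hk
  omega

theorem IsLatticeWord.isRibbonChain : ∀ {α : List ℕ}, (∀ x ∈ α, 0 < x) → α.sum ≤ M →
    IsLatticeWord α.sum (rowEnds α) w → IsRibbonChain M α (wordChain w α)
  | [], _, _, _ => ⟨trivial, trivial, trivial, fun _ _ => rfl⟩
  | y :: α, hpos, hM, h => by
    obtain ⟨hy, hpos⟩ := List.forall_mem_cons.1 hpos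
    obtain ⟨hα, hanti, hstrip, hjump⟩ := (isLatticeWord_cons_iff hy hpos).1 h
    have hsum : (y :: α).sum = α.sum + y := by rw [List.sum_cons, add_comm]
    have hsize : ∀ {n}, n ≤ (y :: α).sum → size M (wordShape w n) = n := fun hn =>
      size_wordShape fun k hk =>
        (letter_le_of_antitone h.antitone (hk.trans_le hn)).trans_lt ((hk.trans_le hn).trans_le hM)
    have ih := hα.isRibbonChain hpos (by omega)
    refine ⟨⟨by rwa [top_wordChain], ih.isStripChain⟩, ⟨?_, ih.hasContent⟩, ?_,
      fun a ha => wordShape_eq_zero h.antitone (hM.trans ha)⟩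
    · rw [top_wordChain, hsize le_rfl, hsize (by omega), hsum]
    · cases α with
      | nil => trivial
      | cons x α =>
        obtain ⟨hx, hpos⟩ := List.forall_mem_cons.1 hpos
        have hk : (x :: α).sum - 1 + 1 = (x :: α).sum := by
          rw [List.sum_cons]
          omega
        refine ⟨?_, ih.allDescend⟩
        rw [top_wordChain]
        exact (hα.descends_iff hx hpos hanti hk (by omega)).2 (hjump _ hk)

theorem IsLatticeWord.eqOn : ∀ {α : List ℕ}, (∀ x ∈ α, 0 < x) →
    IsLatticeWord α.sum (rowEnds α) w → IsLatticeWord α.sum (rowEnds α) w' →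
    wordChain w α = wordChain w' α → EqOn w w' (Set.Iio α.sum)
  | [], _, _, _, _ => fun k hk => absurd hk k.not_lt_zero
  | y :: α, hpos, h, h', heq => by
    obtain ⟨hy, hpos⟩ := List.forall_mem_cons.1 hpos
    obtain ⟨hα, hanti, -⟩ := (isLatticeWord_cons_iff hy hpos).1 h
    obtain ⟨hα', hanti', -⟩ := (isLatticeWord_cons_iff hy hpos).1 h'
    obtain ⟨hshape, htail⟩ := List.cons.inj heq
    have hle : α.sum ≤ (y :: α).sum := by simp
    rw [← Set.Iio_union_Ico_eq_Iio hle]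
    refine (hα.eqOn hpos hα' htail).union (eqOn_row hle ?_ hanti hanti' hshape)
    rw [← top_wordChain, ← top_wordChain, htail]

theorem IsRibbonChain.exists_isLatticeWord : ∀ {α : List ℕ} {l : List Shape}, (∀ x ∈ α, 0 < x) →
    IsRibbonChain M α l → ∃ w, IsLatticeWord α.sum (rowEnds α) w ∧ wordChain w α = l
  | [], [], _, _ => ⟨0, ⟨fun m hm => by
      rw [Nat.le_zero.1 hm, wordShape_zero]
      exact antitone_const, fun k hk => absurd hk (k + 1).not_lt_zero⟩, rfl⟩
  | y :: α, r :: l, hpos, h => by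
    obtain ⟨hy, hpos⟩ := List.forall_mem_cons.1 hpos
    obtain ⟨w, hw, rfl⟩ := h.of_cons.exists_isLatticeWord hpos
    have hsum : (y :: α).sum = α.sum + y := by rw [List.sum_cons, add_comm]
    have hstrip := h.isStripChain.1
    have hsize := h.hasContent.1
    rw [top_wordChain] at hstrip hsize
    obtain ⟨w', heq, hanti, hr⟩ := exists_row y (fun a => (hstrip a).1) hsize h.support
    rw [← hsum] at hanti hr
    have hw' := hw.congr heq
    refine ⟨w', (isLatticeWord_cons_iff hy hpos).2 ⟨hw', hanti, ?_, fun k hk => ?_⟩,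
      by rw [wordChain, hr, wordChain_congr heq]⟩
    · rwa [hr, wordShape_congr heq]
    · cases α with
      | nil => cases hk
      | cons x α =>
        obtain ⟨hx, hpos⟩ := List.forall_mem_cons.1 hpos
        have hdes := h.allDescend.1
        rw [← hr, top_wordChain, ← wordShape_congr heq,
          ← wordShape_congr (heq.mono (Set.Iio_subset_Iio (by simp)))] at hdes
        exact (hw'.descends_iff hx hpos hanti hk (by omega)).1 hdes

/-- The words of `IsLatticeWord`, with letter counts `ρ` and normalized to vanish from position `n`
on. -/
def latticeWords (n : ℕ) (S : Set ℕ) (ρ : Shape) : Set (ℕ → ℕ) :=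
  {w | IsLatticeWord n S w ∧ (∀ k, n ≤ k → w k = 0) ∧ wordShape w n = ρ}

theorem bijOn_wordChain (hpos : ∀ x ∈ α, 0 < x) (ρ : Shape) :
    BijOn (wordChain · α) (latticeWords α.sum (rowEnds α) ρ)
      {l | IsRibbonChain α.sum α l ∧ top l = ρ} := by
  refine ⟨fun w hw => ⟨hw.1.isRibbonChain hpos le_rfl, (top_wordChain w α).trans hw.2.2⟩,
    fun w hw w' hw' heq => ?_, fun l hl => ?_⟩
  · ext k
    rcases lt_or_ge k α.sum with hk | hk
    · exact hw.1.eqOn hpos hw'.1 heq hk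
    · rw [hw.2.1 k hk, hw'.2.1 k hk]
  · obtain ⟨w, hw, rfl⟩ := hl.1.exists_isLatticeWord hpos
    have heq : EqOn ((Set.Iio α.sum).indicator w) w (Set.Iio α.sum) := eqOn_indicator
    refine ⟨(Set.Iio α.sum).indicator w, ⟨hw.congr heq, fun k hk => ?_, ?_⟩, wordChain_congr heq⟩
    · exact indicator_of_notMem (by simpa using hk) w
    · rw [wordShape_congr heq, ← top_wordChain, hl.2]

end Words

section Heights

variable {S S' : Set ℕ} {N k m n t : ℕ} {α : List ℕ}

theorem count_congr {p q : ℕ → Prop} [DecidablePred p] [DecidablePred q] (h : ∀ i < k, p i ↔ q i) :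
    Nat.count p k = Nat.count q k :=
  (Nat.count_mono_left fun i hi => (h i hi).1).antisymm
    (Nat.count_mono_left fun i hi => (h i hi).2)

open Classical in
/-- The number of elements of `S` below `k`. If `S` is the set of boxes of a path of boxes, numbered
from `0`, whose successor lies below them, then this is the row index of the box `k`. -/
noncomputable def height (S : Set ℕ) (k : ℕ) : ℕ := Nat.count (· ∈ S) k

theorem height_zero (S : Set ℕ) : height S 0 = 0 := rfl

theorem height_succ_of_mem (h : k ∈ S) : height S (k + 1) = height S k + 1 := by
  classical exact Nat.count_succ_eq_succ_count h

theorem height_succ_of_notMem (h : k ∉ S) : height S (k + 1) = height S k := by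
  classical exact Nat.count_succ_eq_count h

theorem height_mono (S : Set ℕ) : Monotone (height S) := by
  classical exact Nat.count_monotone _

theorem height_congr (h : ∀ i < k, i ∈ S ↔ i ∈ S') : height S k = height S' k := by
  classical exact count_congr h

theorem height_add_height_compl (S : Set ℕ) (k : ℕ) : height S k + height Sᶜ k = k := by
  classical
  induction k with
  | zero => rfl
  | succ k ih =>
    by_cases h : k ∈ S
    · rw [height_succ_of_mem h, height_succ_of_notMem (not_not.2 h)]
      omega
    · rw [height_succ_of_notMem h, height_succ_of_mem (S := Sᶜ) h]
      omega

/-- The number of `k < N` of height `t`: the number of boxes in row `t` of a path of `N` boxes. -/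
noncomputable def runLength (S : Set ℕ) (N t : ℕ) : ℕ := Nat.count (height S · = t) N

/-- The lengths of any two nonempty rows of the path of `N` boxes given by `S` differ by at most
one. -/
def IsEquitableSet (N : ℕ) (S : Set ℕ) : Prop :=
  ∀ t t', 0 < runLength S N t → 0 < runLength S N t' → runLength S N t ≤ runLength S N t' + 1

theorem runLength_congr (h : ∀ k, k + 1 < N → (k ∈ S ↔ k ∈ S')) (t : ℕ) :
    runLength S N t = runLength S' N t :=
  count_congr fun k hk => by rw [height_congr fun i hi => h i (by omega)]

theorem exists_rowEnds (S : Set ℕ) (N : ℕ) : ∃ α : List ℕ, (∀ x ∈ α, 0 < x) ∧ α.sum = N ∧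
    ∀ k, k + 1 < N → (k ∈ S ↔ k ∈ rowEnds α) := by
  induction N with
  | zero => exact ⟨[], by simp, rfl, by omega⟩
  | succ n ih =>
    obtain ⟨_ | ⟨y, α⟩, hpos, rfl, hS⟩ := ih
    · exact ⟨[1], by simp, rfl, fun k hk => by simp at hk⟩
    by_cases h : (y :: α).sum - 1 ∈ S
    · have hends : ∀ k, k ∈ rowEnds (1 :: y :: α) ↔ k + 1 = (y :: α).sum ∨ k ∈ rowEnds (y :: α) :=
        fun k => Iff.rfl
      refine ⟨1 :: y :: α, by simpa using hpos, add_comm _ _, fun k hk => ?_⟩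
      rw [hends]
      rcases (Nat.le_of_lt_succ hk).lt_or_eq with hk | hk
      · rw [or_iff_right hk.ne, hS k hk]
      · exact iff_of_true (by rwa [← hk] at h) (Or.inl hk)
    · have hpos' := List.forall_mem_cons.1 hpos
      refine ⟨(y + 1) :: α, by simpa using hpos'.2, by simp; omega, fun k hk => ?_⟩
      rcases (Nat.le_of_lt_succ hk).lt_or_eq with hk | hk
      · exact hS k hk
      · exact iff_of_false (by rwa [← hk] at h) fun hmem =>
          (succ_lt_sum_of_mem_rowEnds (α := y :: α) hpos hmem).ne hk

theorem runLength_rowEnds_cons (y : ℕ) (hpos : ∀ x ∈ α, 0 < x) (t : ℕ) :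
    runLength (rowEnds (y :: α)) (y :: α).sum t =
      if height (rowEnds (y :: α)) α.sum = t then y else runLength (rowEnds α) α.sum t := by
  have hends : ∀ k, k ∈ rowEnds (y :: α) ↔ k + 1 = α.sum ∨ k ∈ rowEnds α := fun k => Iff.rfl
  have hlast : ∀ k, height (rowEnds (y :: α)) (α.sum + k) = height (rowEnds (y :: α)) α.sum := by
    intro k
    induction k with
    | zero => rfl
    | succ k ih =>
      rw [← add_assoc, height_succ_of_notMem, ih]
      rintro (h | h)
      · have : α.sum + k + 1 = α.sum := h
        omega
      · have := succ_lt_sum_of_mem_rowEnds hpos h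
        omega
  have hearlier : ∀ k < α.sum, height (rowEnds (y :: α)) k < height (rowEnds (y :: α)) α.sum := by
    intro k hk
    obtain ⟨n, hn⟩ := Nat.exists_eq_add_of_lt hk
    have hle := height_mono (rowEnds (y :: α)) (Nat.le_add_right k n)
    rw [hn, height_succ_of_mem ((hends _).2 (Or.inl hn.symm))]
    exact Nat.lt_succ_of_le hle
  rw [runLength, List.sum_cons, add_comm y, Nat.count_add]
  simp only [hlast]
  split_ifs with h
  · rw [Nat.count_of_forall_not fun _ hk => ((hearlier _ hk).trans_eq h).ne,
      Nat.count_of_forall fun _ _ => h, zero_add]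
  · rw [Nat.count_of_forall_not fun _ _ => h, add_zero]
    exact runLength_congr (fun k hk => by rw [hends, or_iff_right hk.ne]) t

theorem runLength_rowEnds_mem : ∀ {α : List ℕ}, (∀ x ∈ α, 0 < x) →
    0 < runLength (rowEnds α) α.sum t → runLength (rowEnds α) α.sum t ∈ α
  | [], _, h => absurd h (by simp [runLength])
  | y :: α, hpos, h => by
    have hpos := (List.forall_mem_cons.1 hpos).2
    rw [runLength_rowEnds_cons y hpos] at h ⊢
    split_ifs at h ⊢
    · exact List.mem_cons_self
    · exact List.mem_cons_of_mem _ (runLength_rowEnds_mem hpos h)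

end Heights

section WordOrder

variable {N : ℕ} {S S' S'' : Set ℕ} {ρ : Shape} {α : List ℕ}

/-- The shapes, as letter counts, that occur among the lattice words for `S`: the support of the
corresponding ribbon. -/
def wordShapes (N : ℕ) (S : Set ℕ) : Set Shape := {ρ | (latticeWords N S ρ).Nonempty}

/-- Schur-positivity of the difference of the ribbons given by `S'` and `S`. -/
def WordLE (N : ℕ) (S S' : Set ℕ) : Prop := ∀ ρ, Injects (latticeWords N S ρ) (latticeWords N S' ρ)

/-- Schur-positivity of the difference of the ribbons given by `S'` and `S`, with strict containment
of supports. -/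
def WordLT (N : ℕ) (S S' : Set ℕ) : Prop := WordLE N S S' ∧ wordShapes N S ⊂ wordShapes N S'

theorem WordLE.wordShapes_subset (h : WordLE N S S') : wordShapes N S ⊆ wordShapes N S' :=
  fun ρ ⟨w, hw⟩ => by
    obtain ⟨F, hF, -⟩ := h ρ
    exact ⟨F w, hF hw⟩

theorem WordLT.trans (h : WordLT N S S') (h' : WordLT N S' S'') : WordLT N S S'' :=
  ⟨fun ρ => (h.1 ρ).trans (h'.1 ρ), h.2.trans h'.2⟩

theorem latticeWords_congr (h : ∀ k, k + 1 < N → (k ∈ S ↔ k ∈ S')) :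
    latticeWords N S = latticeWords N S' := by
  have hiff : ∀ w, IsLatticeWord N S w ↔ IsLatticeWord N S' w := fun w =>
    ⟨fun hw => ⟨hw.1, fun k hk => (hw.2 k hk).trans (h k hk)⟩,
      fun hw => ⟨hw.1, fun k hk => (hw.2 k hk).trans (h k hk).symm⟩⟩
  funext ρ
  simp only [latticeWords, hiff]

theorem mem_wordShapes_rowEnds (hpos : ∀ x ∈ α, 0 < x) :
    ρ ∈ wordShapes α.sum (rowEnds α) ↔ ∃ l, IsRibbonChain α.sum α l ∧ top l = ρ := by
  change Set.Nonempty _ ↔ Set.Nonempty {l | IsRibbonChain α.sum α l ∧ top l = ρ}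
  rw [← (bijOn_wordChain hpos ρ).image_eq, image_nonempty]

theorem exists_wordLT_of_not_isEquitableSet (h : ¬ IsEquitableSet N S) : ∃ S', WordLT N S S' := by
  obtain ⟨α, hpos, rfl, hS⟩ := exists_rowEnds S N
  simp only [IsEquitableSet, runLength_congr hS] at h
  push Not at h
  obtain ⟨t, t', ht, ht', hlt⟩ := h
  obtain ⟨β, hposβ, hsum, hinj, hnew⟩ := exists_injects_ribbonChains hpos
    ⟨_, runLength_rowEnds_mem hpos ht', _, runLength_rowEnds_mem hpos ht, by omega⟩
  have hle : WordLE α.sum (rowEnds α) (rowEnds β) := fun ρ => by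
    have hα := bijOn_wordChain hpos ρ
    have hβ := bijOn_wordChain hposβ ρ
    rw [hsum] at hβ
    exact (Injects.trans ⟨_, hα.mapsTo, hα.injOn⟩ (hinj α.sum ρ)).trans
      (.of_leftInvOn hβ.surjOn.mapsTo_invFunOn hβ.surjOn.rightInvOn_invFunOn)
  refine ⟨rowEnds β, ?_⟩
  simp only [WordLT, WordLE, wordShapes, latticeWords_congr hS]
  obtain ⟨l, hl, hne⟩ := hnew α.sum hsum.le
  refine ⟨hle, (ssubset_iff_of_subset hle.wordShapes_subset).2 ⟨top l, ?_, fun hmem => ?_⟩⟩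
  · rw [← hsum] at hl ⊢
    exact (mem_wordShapes_rowEnds hposβ).2 ⟨l, hl, rfl⟩
  · obtain ⟨l', hl', htop⟩ := (mem_wordShapes_rowEnds hpos).1 hmem
    exact hne l' hl' htop

end WordOrder

section Transposition

variable {w : ℕ → ℕ} {N k n : ℕ} {S S' : Set ℕ} {ρ : Shape}

/-- The conjugate of a partition with at most `N` parts. -/
def conjugate (N : ℕ) (ρ : Shape) : Shape := fun m => #{a ∈ range N | m < ρ a}

/-- The lattice word of the transposed standard tableau: its letters are the columns, instead of the
rows, in which the boxes are added. It is normalized to vanish from position `N` on. -/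
noncomputable def transpose (N : ℕ) (w : ℕ → ℕ) : ℕ → ℕ :=
  (Set.Iio N).indicator fun i => wordShape w i (w i)

theorem transpose_of_lt (h : k < N) : transpose N w k = wordShape w k (w k) :=
  indicator_of_mem (show k ∈ Set.Iio N from h) _

theorem conjugate_wordShape_succ (h : w n < N) (m : ℕ) :
    conjugate N (wordShape w (n + 1)) m =
      conjugate N (wordShape w n) m + if wordShape w n (w n) = m then 1 else 0 := by
  have hbox : ∀ a, (if m < wordShape w (n + 1) a then 1 else 0) =
      (if m < wordShape w n a then 1 else 0) +
        if w n = a then if wordShape w n a = m then 1 else 0 else 0 := fun a => by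
    rw [wordShape_succ]
    split_ifs <;> omega
  simp only [conjugate, card_filter, hbox, sum_add_distrib, sum_ite_eq, Finset.mem_range, h,
    if_true]

theorem wordShape_transpose (h : ∀ m ≤ N, Antitone (wordShape w m)) (hn : n ≤ N) :
    wordShape (transpose N w) n = conjugate N (wordShape w n) := by
  ext m
  induction n with
  | zero => simp [wordShape_zero, conjugate]
  | succ n ih =>
    have hlt : w n < N := (letter_le_of_antitone h hn).trans_lt hn
    rw [wordShape_succ, transpose_of_lt hn, ih (by omega), conjugate_wordShape_succ hlt]

theorem transpose_lt_transpose_iff (h : ∀ m ≤ N, Antitone (wordShape w m)) (hk : k + 1 < N) :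
    transpose N w k < transpose N w (k + 1) ↔ ¬ w k < w (k + 1) := by
  rw [transpose_of_lt (by omega), transpose_of_lt hk, wordShape_succ]
  constructor
  · intro hlt hdes
    have := h k (by omega) hdes.le
    rw [if_neg hdes.ne] at hlt
    omega
  · intro hdes
    have := h (k + 1) (by omega) (not_lt.1 hdes)
    rw [wordShape_succ, wordShape_succ, if_pos rfl] at this
    omega

theorem IsLatticeWord.transpose (h : IsLatticeWord N S w) : IsLatticeWord N Sᶜ (transpose N w) where
  antitone m hm a b hab := by
    rw [wordShape_transpose h.antitone hm]
    exact card_le_card (monotone_filter_right _ fun _ _ => hab.trans_lt)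
  lt_succ_iff k hk := by
    rw [transpose_lt_transpose_iff h.antitone hk, h.lt_succ_iff k hk, mem_compl_iff]

theorem conjugate_wordShape_letter (h : ∀ m ≤ N, Antitone (wordShape w m)) (hk : k < N) :
    conjugate N (wordShape w k) (wordShape w k (w k)) = w k := by
  have hbelow : ∀ a, wordShape w k (w k) < wordShape w k a ↔ a < w k := by
    refine fun a => ⟨fun hlt => ?_, fun hlt => ?_⟩
    · by_contra hle
      exact hlt.not_ge (h k hk.le (not_lt.1 hle))
    · have := h (k + 1) hk hlt.le
      rw [wordShape_succ, wordShape_succ, if_pos rfl, if_neg hlt.ne'] at this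
      omega
  have hlt : w k < N := (letter_le_of_antitone h hk).trans_lt hk
  have : {a ∈ range N | wordShape w k (w k) < wordShape w k a} = range (w k) := by
    ext a
    simp only [hbelow, mem_filter, Finset.mem_range]
    omega
  rw [conjugate, this, card_range]

theorem mapsTo_transpose (N : ℕ) (S : Set ℕ) (ρ : Shape) :
    MapsTo (transpose N) (latticeWords N S ρ) (latticeWords N Sᶜ (conjugate N ρ)) := by
  rintro w ⟨hw, -, rfl⟩
  exact ⟨hw.transpose, fun k hk => indicator_of_notMem (by simpa using hk) _,
    wordShape_transpose hw.antitone le_rfl⟩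

theorem leftInvOn_transpose (N : ℕ) (S : Set ℕ) (ρ : Shape) :
    LeftInvOn (transpose N) (transpose N) (latticeWords N S ρ) := by
  rintro w ⟨hw, hzero, -⟩
  ext k
  rcases lt_or_ge k N with hk | hk
  · rw [transpose_of_lt hk, wordShape_transpose hw.antitone hk.le, transpose_of_lt hk,
      conjugate_wordShape_letter hw.antitone hk]
  · rw [hzero k hk]
    exact indicator_of_notMem (by simpa using hk) _

theorem injects_conjugate (N : ℕ) (S : Set ℕ) (ρ : Shape) :
    Injects (latticeWords N S ρ) (latticeWords N Sᶜ (conjugate N ρ)) :=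
  .of_leftInvOn (mapsTo_transpose N S ρ) (leftInvOn_transpose N S ρ)

theorem conjugate_mem_wordShapes (h : ρ ∈ wordShapes N S) : conjugate N ρ ∈ wordShapes N Sᶜ :=
  h.image (transpose N) |>.mono (mapsTo_transpose N S ρ).image_subset

theorem conjugate_conjugate (h : ρ ∈ wordShapes N S) : conjugate N (conjugate N ρ) = ρ := by
  obtain ⟨w, hw⟩ := h
  rw [← (mapsTo_transpose N _ _ (mapsTo_transpose N S ρ hw)).2.2, leftInvOn_transpose N S ρ hw,
    hw.2.2]

theorem WordLT.of_compl (h : WordLT N Sᶜ S') : WordLT N S S'ᶜ := by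
  have hle : WordLE N S S'ᶜ := fun ρ => by
    rcases (latticeWords N S ρ).eq_empty_or_nonempty with hρ | hρ
    · rw [hρ]
      exact ⟨id, mapsTo_empty _ _, injOn_empty _⟩
    · have := ((injects_conjugate N S ρ).trans (h.1 _)).trans (injects_conjugate N S' _)
      rwa [conjugate_conjugate hρ] at this
  refine ⟨hle, (ssubset_iff_of_subset hle.wordShapes_subset).2 ?_⟩
  obtain ⟨ρ, hρ', hρ⟩ := exists_of_ssubset h.2
  refine ⟨conjugate N ρ, conjugate_mem_wordShapes hρ', fun hmem => hρ ?_⟩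
  rw [← conjugate_conjugate hρ']
  exact conjugate_mem_wordShapes hmem

end Transposition

section Maximality

variable {N : ℕ} {S : Set ℕ} {ρ : Shape}

theorem finite_words (N : ℕ) : {w : ℕ → ℕ | (∀ k < N, w k ≤ k) ∧ ∀ k, N ≤ k → w k = 0}.Finite := by
  refine Set.Finite.of_injOn (f := fun (w : ℕ → ℕ) (k : Fin N) => w k)
    (t := Set.Iic fun k : Fin N => (k : ℕ)) (fun w hw k => hw.1 k k.2)
    (fun w hw w' hw' heq => funext fun k => ?_) (Set.finite_Iic _)
  rcases lt_or_ge k N with hk | hk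
  · exact congrFun heq ⟨k, hk⟩
  · rw [hw.2 k hk, hw'.2 k hk]

theorem latticeWords_subset (N : ℕ) (S : Set ℕ) (ρ : Shape) :
    latticeWords N S ρ ⊆ {w | (∀ k < N, w k ≤ k) ∧ ∀ k, N ≤ k → w k = 0} :=
  fun _ hw => ⟨fun _ hk => letter_le_of_antitone hw.1.antitone hk, hw.2.1⟩

theorem finite_latticeWords (N : ℕ) (S : Set ℕ) (ρ : Shape) : (latticeWords N S ρ).Finite :=
  (finite_words N).subset (latticeWords_subset N S ρ)

theorem finite_range_wordShapes (N : ℕ) : (Set.range (wordShapes N)).Finite := by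
  refine ((finite_words N).image (wordShape · N)).finite_subsets.subset ?_
  rintro _ ⟨S, rfl⟩ ρ ⟨w, hw⟩
  exact ⟨w, latticeWords_subset N S ρ hw, hw.2.2⟩

theorem exists_wordLT (h : ¬ (IsEquitableSet N S ∧ IsEquitableSet N Sᶜ)) :
    ∃ S', WordLT N S S' := by
  rcases not_and_or.1 h with h | h
  · exact exists_wordLT_of_not_isEquitableSet h
  · obtain ⟨S', hS'⟩ := exists_wordLT_of_not_isEquitableSet h
    exact ⟨S'ᶜ, hS'.of_compl⟩

theorem exists_wordLT_isEquitableSet (h : ¬ (IsEquitableSet N S ∧ IsEquitableSet N Sᶜ)) :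
    ∃ S', WordLT N S S' ∧ IsEquitableSet N S' ∧ IsEquitableSet N S'ᶜ := by
  obtain ⟨S', hS', hmax⟩ := Set.Finite.exists_maximalFor' (wordShapes N) {S' | WordLT N S S'}
    ((finite_range_wordShapes N).subset (image_subset_range _ _)) (exists_wordLT h)
  refine ⟨S', hS', by_contra fun hne => ?_⟩
  obtain ⟨S'', hS''⟩ := exists_wordLT hne
  exact hS''.2.not_subset (hmax (WordLT.trans hS' hS'') hS''.2.subset)

end Maximality

section RibbonPaths

variable {A : SkewShape} {N k m : ℕ} {S : Set ℕ} {c : ℕ × ℕ} {T : ℕ × ℕ → ℕ} {w : ℕ → ℕ}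
  {lam : Multiset ℕ}

/-- The box `k` of the path of boxes that starts at the box `0` in position `c` and goes down from
the boxes in `S` and to the left from all others. -/
noncomputable def ribbonBox (S : Set ℕ) (c : ℕ × ℕ) (k : ℕ) : ℕ × ℕ :=
  (c.1 + height S k, c.2 - height Sᶜ k)

/-- The boxes of `A`, in the order in which they are read, form the path of `N` boxes that starts
at `c` and goes down from the boxes in `S`. The second condition keeps the truncated subtraction in
`ribbonBox` from cutting the path off at the first column. -/
structure IsRibbonPath (A : SkewShape) (N : ℕ) (S : Set ℕ) (c : ℕ × ℕ) : Prop where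
  cells_eq : A.cells = (range N).image (ribbonBox S c)
  height_compl_le : ∀ k < N, height Sᶜ k ≤ c.2

theorem ribbonBox_succ_of_mem (h : k ∈ S) :
    ribbonBox S c (k + 1) = ((ribbonBox S c k).1 + 1, (ribbonBox S c k).2) := by
  simp only [ribbonBox, height_succ_of_mem h, height_succ_of_notMem (S := Sᶜ) (not_not.2 h),
    add_assoc]

theorem ribbonBox_succ_of_notMem (h : k ∉ S) :
    ribbonBox S c (k + 1) = ((ribbonBox S c k).1, (ribbonBox S c k).2 - 1) := by
  simp only [ribbonBox, height_succ_of_notMem h, height_succ_of_mem (S := Sᶜ) h, Nat.sub_sub]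

theorem notMem_of_height_eq (h : height S m = height S k) {i : ℕ} (hmi : m ≤ i) (hik : i < k) :
    i ∉ S := fun hi => by
  have := height_mono S hmi
  have := height_mono S (show i + 1 ≤ k from hik)
  rw [height_succ_of_mem hi] at this
  omega

namespace IsRibbonPath

theorem mem_cells_iff (h : IsRibbonPath A N S c) {d : ℕ × ℕ} :
    d ∈ A.cells ↔ ∃ k < N, ribbonBox S c k = d := by
  simp [h.cells_eq]

theorem ribbonBox_mem (h : IsRibbonPath A N S c) (hk : k < N) : ribbonBox S c k ∈ A.cells :=
  h.mem_cells_iff.2 ⟨k, hk, rfl⟩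

theorem readsBefore_iff (h : IsRibbonPath A N S c) (hk : k < N) (hm : m < N) :
    ReadsBefore (ribbonBox S c k) (ribbonBox S c m) ↔ k ≤ m := by
  have := h.height_compl_le k hk
  have := h.height_compl_le m hm
  have := height_add_height_compl S k
  have := height_add_height_compl S m
  simp only [ReadsBefore, ribbonBox]
  rcases Nat.le_total k m with hkm | hkm
  all_goals
    have := height_mono S hkm
    have := height_mono Sᶜ hkm
    omega

theorem injOn_ribbonBox (h : IsRibbonPath A N S c) : InjOn (ribbonBox S c) (Set.Iio N) :=
  fun _ hk _ hm hkm => le_antisymm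
    ((h.readsBefore_iff hk hm).1 (Or.inr ⟨congrArg Prod.fst hkm, (congrArg Prod.snd hkm).ge⟩))
    ((h.readsBefore_iff hm hk).1 (Or.inr ⟨congrArg Prod.fst hkm.symm, (congrArg Prod.snd hkm).le⟩))

theorem card_filter (h : IsRibbonPath A N S c) (p : ℕ × ℕ → Prop) [DecidablePred p] :
    #{d ∈ A.cells | p d} = Nat.count (fun k => p (ribbonBox S c k)) N := by
  rw [h.cells_eq, filter_image, Nat.count_eq_card_filter_range, card_image_of_injOn]
  exact h.injOn_ribbonBox.mono fun k hk => Finset.mem_range.1 (Finset.mem_filter.1 hk).1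

theorem size_eq (h : IsRibbonPath A N S c) : A.size = N := by
  have := h.card_filter fun _ => True
  simpa [SkewShape.size] using this

theorem antitone_snd (h : IsRibbonPath A N S c) {d e : ℕ × ℕ} (hd : d ∈ A.cells)
    (he : e ∈ A.cells) (hlt : d.1 < e.1) : e.2 ≤ d.2 := by
  obtain ⟨k, hk, rfl⟩ := h.mem_cells_iff.1 hd
  obtain ⟨m, hm, rfl⟩ := h.mem_cells_iff.1 he
  have hkm := (h.readsBefore_iff hk hm).1 (Or.inl hlt)
  exact Nat.sub_le_sub_left (height_mono Sᶜ hkm) c.2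

end IsRibbonPath

section Equitability

theorem mem_rowSet_iff {i : ℕ} : i ∈ A.rowSet ↔ 0 < A.rowLen i := by
  simp [SkewShape.rowSet, SkewShape.rowLen, card_pos, Finset.Nonempty]

theorem mem_colSet_iff {j : ℕ} : j ∈ A.colSet ↔ 0 < A.colLen j := by
  simp [SkewShape.colSet, SkewShape.colLen, card_pos, Finset.Nonempty]

theorem le_add_one_of_values {ι κ : Type*} {f : ι → ℕ} {g : κ → ℕ}
    (hf : ∀ i i', 0 < f i → 0 < f i' → f i ≤ f i' + 1) (hfg : ∀ t, 0 < g t → ∃ i, f i = g t) :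
    ∀ t t', 0 < g t → 0 < g t' → g t ≤ g t' + 1 := by
  intro t t' ht ht'
  obtain ⟨i, hi⟩ := hfg t ht
  obtain ⟨i', hi'⟩ := hfg t' ht'
  rw [← hi, ← hi']
  exact hf i i' (hi ▸ ht) (hi' ▸ ht')

namespace IsRibbonPath

theorem rowLen_add (h : IsRibbonPath A N S c) (t : ℕ) : A.rowLen (c.1 + t) = runLength S N t := by
  simp only [SkewShape.rowLen, h.card_filter, ribbonBox, Nat.add_left_cancel_iff, runLength]

theorem colLen_sub (h : IsRibbonPath A N S c) {t : ℕ} (ht : t ≤ c.2) :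
    A.colLen (c.2 - t) = runLength Sᶜ N t := by
  rw [SkewShape.colLen, h.card_filter, runLength]
  refine count_congr fun k hk => ?_
  have := h.height_compl_le k hk
  simp only [ribbonBox]
  omega

theorem rowEquitable_iff (h : IsRibbonPath A N S c) : A.RowEquitable ↔ IsEquitableSet N S := by
  simp only [SkewShape.RowEquitable, mem_rowSet_iff]
  constructor
  · exact fun H => le_add_one_of_values (fun i i' hi hi' => H i hi i' hi')
      fun t _ => ⟨c.1 + t, h.rowLen_add t⟩
  · refine fun H i hi i' hi' => le_add_one_of_values H (fun i hi => ?_) i i' hi hi'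
    obtain ⟨d, hd, rfl⟩ := Finset.mem_image.1 (mem_rowSet_iff.2 hi)
    obtain ⟨k, -, rfl⟩ := h.mem_cells_iff.1 hd
    exact ⟨height S k, (h.rowLen_add _).symm⟩

theorem colEquitable_iff (h : IsRibbonPath A N S c) : A.ColEquitable ↔ IsEquitableSet N Sᶜ := by
  simp only [SkewShape.ColEquitable, mem_colSet_iff]
  constructor
  · refine fun H => le_add_one_of_values (fun j j' hj hj' => H j hj j' hj') fun t ht => ?_
    obtain ⟨k, hk, rfl⟩ := Nat.count_ne_iff_exists.1 ht.ne'
    exact ⟨c.2 - height Sᶜ k, h.colLen_sub (h.height_compl_le k hk)⟩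
  · refine fun H j hj j' hj' => le_add_one_of_values H (fun j hj => ?_) j j' hj hj'
    obtain ⟨d, hd, rfl⟩ := Finset.mem_image.1 (mem_colSet_iff.2 hj)
    obtain ⟨k, hk, rfl⟩ := h.mem_cells_iff.1 hd
    exact ⟨height Sᶜ k, (h.colLen_sub (h.height_compl_le k hk)).symm⟩

end IsRibbonPath

end Equitability

section Fillings

namespace IsRibbonPath

theorem lt_succ_iff_of_isSsyt (h : IsRibbonPath A N S c) (hT : A.IsSsyt T) (hk : k + 1 < N) :
    T (ribbonBox S c k) < T (ribbonBox S c (k + 1)) ↔ k ∈ S := by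
  have hmem := h.ribbonBox_mem (show k < N by omega)
  have hmem' := h.ribbonBox_mem hk
  by_cases hkS : k ∈ S
  · rw [ribbonBox_succ_of_mem hkS] at hmem' ⊢
    exact iff_of_true (hT.2.2 _ _ _ hmem hmem' (Nat.lt_succ_self _)) hkS
  · rw [ribbonBox_succ_of_notMem hkS] at hmem' ⊢
    exact iff_of_false (hT.2.1 _ _ _ hmem' hmem (Nat.sub_le _ _)).not_gt hkS

theorem le_of_same_row (h : IsRibbonPath A N S c)
    (hT : ∀ k, k + 1 < N → (T (ribbonBox S c k) < T (ribbonBox S c (k + 1)) ↔ k ∈ S))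
    {i j j' : ℕ} (hj : (i, j) ∈ A.cells) (hj' : (i, j') ∈ A.cells) (hle : j ≤ j') :
    T (i, j) ≤ T (i, j') := by
  obtain ⟨k, hk, hkj⟩ := h.mem_cells_iff.1 hj
  obtain ⟨m, hm, hmj⟩ := h.mem_cells_iff.1 hj'
  rw [← hkj, ← hmj]
  have hmk : m ≤ k := (h.readsBefore_iff hm hk).1 (by rw [hkj, hmj]; exact Or.inr ⟨rfl, hle⟩)
  have hrow : height S m = height S k :=
    Nat.add_left_cancel (congrArg Prod.fst hmj |>.trans (congrArg Prod.fst hkj).symm)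
  refine antitoneOn_of_add_one_le (f := fun n => T (ribbonBox S c n)) Set.ordConnected_Icc
    (fun n _ hn hn' => not_lt.1 fun hlt => ?_)
    (Set.left_mem_Icc.2 hmk) (Set.right_mem_Icc.2 hmk) hmk
  exact notMem_of_height_eq hrow hn.1 hn'.2 ((hT n (hn'.2.trans_lt hk)).1 hlt)

theorem lt_of_same_column (h : IsRibbonPath A N S c)
    (hT : ∀ k, k + 1 < N → (T (ribbonBox S c k) < T (ribbonBox S c (k + 1)) ↔ k ∈ S))
    {i i' j : ℕ} (hi : (i, j) ∈ A.cells) (hi' : (i', j) ∈ A.cells) (hlt : i < i') :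
    T (i, j) < T (i', j) := by
  obtain ⟨k, hk, hki⟩ := h.mem_cells_iff.1 hi
  obtain ⟨m, hm, hmi⟩ := h.mem_cells_iff.1 hi'
  have hkm : k ≤ m := (h.readsBefore_iff hk hm).1 (by rw [hki, hmi]; exact Or.inl hlt)
  have hkm' : k ≠ m := fun heq => hlt.ne (congrArg Prod.fst (hki.symm.trans (heq ▸ hmi)))
  have hcol : height Sᶜ k = height Sᶜ m := by
    have := h.height_compl_le k hk
    have := h.height_compl_le m hm
    have := (congrArg Prod.snd hki).trans (congrArg Prod.snd hmi).symm
    simp only [ribbonBox] at this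
    omega
  rw [← hki, ← hmi]
  refine strictMonoOn_of_lt_add_one (f := fun n => T (ribbonBox S c n)) Set.ordConnected_Icc
    (fun n _ hn hn' => (hT n (hn'.2.trans_lt hm)).2 ?_)
    (Set.left_mem_Icc.2 hkm) (Set.right_mem_Icc.2 hkm) (lt_of_le_of_ne hkm hkm')
  exact not_not.1 (notMem_of_height_eq hcol hn.1 hn'.2)

theorem isSsyt_iff (h : IsRibbonPath A N S c) : A.IsSsyt T ↔
    (∀ k < N, 1 ≤ T (ribbonBox S c k)) ∧
      ∀ k, k + 1 < N → (T (ribbonBox S c k) < T (ribbonBox S c (k + 1)) ↔ k ∈ S) := by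
  constructor
  · exact fun hT => ⟨fun k hk => hT.1 _ (h.ribbonBox_mem hk), fun k => h.lt_succ_iff_of_isSsyt hT⟩
  · rintro ⟨hpos, hT⟩
    refine ⟨fun d hd => ?_, fun i j j' => h.le_of_same_row hT, fun i i' j => h.lt_of_same_column hT⟩
    obtain ⟨k, hk, rfl⟩ := h.mem_cells_iff.1 hd
    exact hpos k hk

end IsRibbonPath

/-- The reverse reading word of a filling of a ribbon, with letters starting at `0` and extended by
zeros. -/
noncomputable def fillingWord (N : ℕ) (S : Set ℕ) (c : ℕ × ℕ) (T : ℕ × ℕ → ℕ) : ℕ → ℕ :=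
  (Set.Iio N).indicator fun k => T (ribbonBox S c k) - 1

/-- The filling of the path of boxes `A` starting at `c` whose reverse reading word is `w`. -/
def wordFilling (A : SkewShape) (c : ℕ × ℕ) (w : ℕ → ℕ) : ℕ × ℕ → ℕ :=
  fun d => if d ∈ A.cells then w (d.1 - c.1 + (c.2 - d.2)) + 1 else 0

theorem fillingWord_of_lt (hk : k < N) : fillingWord N S c T k = T (ribbonBox S c k) - 1 :=
  indicator_of_mem (s := Set.Iio N) hk _

theorem fillingWord_of_le (hk : N ≤ k) : fillingWord N S c T k = 0 :=
  indicator_of_notMem (s := Set.Iio N) hk.not_gt _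

namespace IsRibbonPath

theorem content_eq (h : IsRibbonPath A N S c) (hT : ∀ k < N, 1 ≤ T (ribbonBox S c k)) (i : ℕ) :
    A.content T (i + 1) = wordShape (fillingWord N S c T) N i := by
  rw [SkewShape.content, h.card_filter, wordShape]
  refine count_congr fun k hk => ?_
  have := hT k hk
  rw [fillingWord_of_lt hk]
  omega

theorem card_readsBefore (h : IsRibbonPath A N S c) (hT : ∀ k < N, 1 ≤ T (ribbonBox S c k))
    (hm : m < N) (i : ℕ) :
    #{d ∈ A.cells | T d = i + 1 ∧ ReadsBefore d (ribbonBox S c m)} =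
      wordShape (fillingWord N S c T) (m + 1) i := by
  rw [h.card_filter, wordShape, Nat.count_eq_card_filter_range, Nat.count_eq_card_filter_range]
  congr 1
  ext k
  simp only [Finset.mem_filter, Finset.mem_range]
  constructor
  · rintro ⟨hk, hki, hkm⟩
    rw [h.readsBefore_iff hk hm] at hkm
    rw [fillingWord_of_lt hk]
    omega
  · rintro ⟨hkm, hki⟩
    have hk : k < N := by omega
    have := hT k hk
    rw [fillingWord_of_lt hk] at hki
    rw [h.readsBefore_iff hk hm]
    omega

theorem isLR_iff (h : IsRibbonPath A N S c) : A.IsLR T ↔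
    (∀ k < N, 1 ≤ T (ribbonBox S c k)) ∧ IsLatticeWord N S (fillingWord N S c T) := by
  rw [SkewShape.IsLR, h.isSsyt_iff, and_assoc]
  refine and_congr_right fun hpos => ?_
  have hlt : ∀ k, k + 1 < N → (fillingWord N S c T k < fillingWord N S c T (k + 1) ↔
      T (ribbonBox S c k) < T (ribbonBox S c (k + 1))) := fun k hk => by
    have := hpos k (by omega)
    rw [fillingWord_of_lt (show k < N by omega), fillingWord_of_lt hk]
    omega
  refine ⟨fun ⟨hT, hprefix⟩ => ⟨?_, fun k hk => (hlt k hk).trans (hT k hk)⟩,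
    fun hw => ⟨fun k hk => (hlt k hk).symm.trans (hw.lt_succ_iff k hk), fun d hd i => ?_⟩⟩
  · rintro (_ | m) hm
    · exact antitone_const
    · refine antitone_nat_of_succ_le fun i => ?_
      rw [← h.card_readsBefore hpos hm, ← h.card_readsBefore hpos hm]
      exact hprefix _ (h.ribbonBox_mem hm) i
  · obtain ⟨m, hm, rfl⟩ := h.mem_cells_iff.1 hd
    rw [h.card_readsBefore hpos hm (i + 1), h.card_readsBefore hpos hm]
    exact hw.antitone (m + 1) hm i.le_succ

theorem wordFilling_ribbonBox (h : IsRibbonPath A N S c) (w : ℕ → ℕ) (hk : k < N) :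
    wordFilling A c w (ribbonBox S c k) = w k + 1 := by
  have hindex : (ribbonBox S c k).1 - c.1 + (c.2 - (ribbonBox S c k).2) = k := by
    have := h.height_compl_le k hk
    have := height_add_height_compl S k
    simp only [ribbonBox]
    omega
  rw [wordFilling, if_pos (h.ribbonBox_mem hk), hindex]

theorem fillingWord_wordFilling (h : IsRibbonPath A N S c) (hw : ∀ k, N ≤ k → w k = 0) :
    fillingWord N S c (wordFilling A c w) = w := by
  funext k
  rcases lt_or_ge k N with hk | hk
  · rw [fillingWord_of_lt hk, h.wordFilling_ribbonBox w hk, Nat.add_sub_cancel]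
  · rw [fillingWord_of_le hk, hw k hk]

theorem fillingWord_mem_latticeWords (h : IsRibbonPath A N S c) (hT : A.IsLR T)
    (hcontent : ∀ i, A.content T (i + 1) = part lam i) :
    fillingWord N S c T ∈ latticeWords N S (part lam) := by
  obtain ⟨hpos, hw⟩ := h.isLR_iff.1 hT
  exact ⟨hw, fun k => fillingWord_of_le, funext fun i => by rw [← h.content_eq hpos, hcontent]⟩

theorem wordFilling_mem_LRset (h : IsRibbonPath A N S c) (hw : w ∈ latticeWords N S (part lam)) :
    wordFilling A c w ∈ A.LRset lam := by
  have hpos : ∀ k < N, 1 ≤ wordFilling A c w (ribbonBox S c k) := fun k hk => by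
    rw [h.wordFilling_ribbonBox w hk]
    exact Nat.le_add_left 1 _
  have hword := h.fillingWord_wordFilling hw.2.1
  refine ⟨h.isLR_iff.2 ⟨hpos, hword.symm ▸ hw.1⟩, fun d hd => if_neg hd, fun i => ?_⟩
  rw [h.content_eq hpos, hword, hw.2.2]

theorem injOn_fillingWord (h : IsRibbonPath A N S c) (lam : Multiset ℕ) :
    InjOn (fillingWord N S c) (A.LRset lam) := by
  intro T hT T' hT' heq
  funext d
  by_cases hd : d ∈ A.cells
  · have hpos := hT.1.1.1 d hd
    have hpos' := hT'.1.1.1 d hd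
    obtain ⟨k, hk, rfl⟩ := h.mem_cells_iff.1 hd
    have := congrFun heq k
    rw [fillingWord_of_lt hk, fillingWord_of_lt hk] at this
    omega
  · rw [hT.2.1 d hd, hT'.2.1 d hd]

theorem bijOn_fillingWord (h : IsRibbonPath A N S c) (lam : Multiset ℕ) :
    BijOn (fillingWord N S c) (A.LRset lam) (latticeWords N S (part lam)) :=
  ⟨fun _ hT => h.fillingWord_mem_latticeWords hT.1 hT.2.2, h.injOn_fillingWord lam,
    fun _ hw => ⟨_, h.wordFilling_mem_LRset hw, h.fillingWord_wordFilling hw.2.1⟩⟩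

theorem ncard_LRset (h : IsRibbonPath A N S c) (lam : Multiset ℕ) :
    (A.LRset lam).ncard = (latticeWords N S (part lam)).ncard := by
  rw [← (h.bijOn_fillingWord lam).image_eq, (h.injOn_fillingWord lam).ncard_image]

theorem mem_supp_iff (h : IsRibbonPath A N S c) :
    lam ∈ A.supp ↔ 0 ∉ lam ∧ part lam ∈ wordShapes N S := by
  refine and_congr_right fun _ => ⟨fun ⟨T, hT, hcontent⟩ => ?_, fun ⟨w, hw⟩ => ?_⟩
  · exact ⟨_, h.fillingWord_mem_latticeWords hT hcontent⟩
  · have hLR := h.wordFilling_mem_LRset hw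
    exact ⟨_, hLR.1, hLR.2.2⟩

end IsRibbonPath

theorem part_coe {l : List ℕ} (hl : l.Pairwise (· ≥ ·)) (i : ℕ) :
    part (l : Multiset ℕ) i = l.getD i 0 := by
  have hsort : (l : Multiset ℕ).sort (· ≥ ·) = l :=
    List.Perm.eq_of_pairwise' (Multiset.pairwise_sort _ _) hl
      (by rw [← Multiset.coe_eq_coe, Multiset.sort_eq])
  rw [part, hsort]

theorem exists_part_eq {f : ℕ → ℕ} (hf : Antitone f) (hzero : ∃ M, f M = 0) :
    ∃ lam : Multiset ℕ, 0 ∉ lam ∧ part lam = f := by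
  have hsorted : ((List.range (Nat.find hzero)).map f).Pairwise (· ≥ ·) :=
    List.pairwise_map.2 (List.pairwise_lt_range.imp fun h => hf h.le)
  refine ⟨((List.range (Nat.find hzero)).map f : List ℕ), ?_, funext fun i => ?_⟩
  · simp only [Multiset.mem_coe, List.mem_map, List.mem_range, not_exists, not_and]
    exact fun k hk => Nat.find_min hzero hk
  · rw [part_coe hsorted]
    rcases lt_or_ge i (Nat.find hzero) with hi | hi
    · simp [List.getD, hi]
    · rw [List.getD_eq_default _ _ (by simpa using hi)]
      exact (Nat.le_zero.1 ((hf hi).trans (Nat.find_spec hzero).le)).symm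

theorem exists_part_eq_of_mem_wordShapes {ρ : Shape} (h : ρ ∈ wordShapes N S) :
    ∃ lam : Multiset ℕ, 0 ∉ lam ∧ part lam = ρ := by
  obtain ⟨w, hw, -, rfl⟩ := h
  exact exists_part_eq (hw.antitone N le_rfl) ⟨N, wordShape_eq_zero hw.antitone le_rfl⟩

section Comparison

variable {R : SkewShape} {S' : Set ℕ} {c' : ℕ × ℕ}

theorem WordLE.schurPosDiff (hle : WordLE N S S') (hA : IsRibbonPath A N S c)
    (hR : IsRibbonPath R N S' c') : R.SchurPosDiff A := fun lam => by
  rw [hA.ncard_LRset, hR.ncard_LRset]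
  exact (hle _).ncard_le (finite_latticeWords N S' _)

theorem WordLT.supp_ssubset (hlt : WordLT N S S') (hA : IsRibbonPath A N S c)
    (hR : IsRibbonPath R N S' c') : A.supp ⊂ R.supp := by
  have hsub : A.supp ⊆ R.supp := fun lam hlam => by
    rw [hA.mem_supp_iff] at hlam
    exact hR.mem_supp_iff.2 ⟨hlam.1, hlt.2.subset hlam.2⟩
  refine (ssubset_iff_of_subset hsub).2 ?_
  obtain ⟨ρ, hρ', hρ⟩ := exists_of_ssubset hlt.2
  obtain ⟨lam, hlam, rfl⟩ := exists_part_eq_of_mem_wordShapes hρ'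
  exact ⟨lam, hR.mem_supp_iff.2 ⟨hlam, hρ'⟩, fun h => hρ (hA.mem_supp_iff.1 h).2⟩

end Comparison

end Fillings

end RibbonPaths

section RibbonToPath

variable {A : SkewShape} {c d : ℕ × ℕ}

theorem mem_cells_of_le_of_le {x : ℕ × ℕ} (hc : c ∈ A.cells) (hd : d ∈ A.cells) (hcx : c ≤ x)
    (hxd : x ≤ d) : x ∈ A.cells := by
  simp only [SkewShape.cells, Finset.mem_sdiff] at *
  exact ⟨A.outer.isLowerSet hxd hd.1, fun hx => hc.2 (A.inner.isLowerSet hcx hx)⟩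

theorem snd_le_snd_of_fst_lt_fst (hA : A.Ribbon) (hc : c ∈ A.cells) (hd : d ∈ A.cells)
    (hlt : c.1 < d.1) : d.2 ≤ c.2 := by
  by_contra! hcd
  have hblock : ∀ x : ℕ × ℕ, c ≤ x → x ≤ (c.1 + 1, c.2 + 1) → x ∈ A.cells := fun x hcx hx =>
    mem_cells_of_le_of_le hc hd hcx (hx.trans ⟨hlt, hcd⟩)
  refine hA.2 c.1 c.2 ⟨hc, hblock _ ?_ ?_, hblock _ ?_ ?_, hblock _ ?_ le_rfl⟩ <;>
    simp [Prod.le_def]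

theorem exists_first_box (hA : A.cells.Nonempty) : ∃ c ∈ A.cells, ∀ d ∈ A.cells,
    ReadsBefore c d := by
  obtain ⟨c, hc, hmin⟩ :=
    exists_min_image A.cells (fun d => toLex (d.1, OrderDual.toDual d.2)) hA
  exact ⟨c, hc, fun d hd => Prod.Lex.toLex_le_toLex.1 (hmin d hd)⟩

theorem below_mem_or_left_mem (hA : A.Ribbon) (hc : c ∈ A.cells) (hd : d ∈ A.cells)
    (hcd : ¬ ReadsBefore d c) :
    (c.1 + 1, c.2) ∈ A.cells ∨ (0 < c.2 ∧ (c.1, c.2 - 1) ∈ A.cells) := by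
  by_contra! hno
  obtain ⟨hbelow, hleft⟩ := hno
  refine hA.1.2 ⟨{x ∈ A.cells | ReadsBefore x c}, {x ∈ A.cells | ¬ ReadsBefore x c},
    ⟨c, Finset.mem_filter.2 ⟨hc, Or.inr ⟨rfl, le_rfl⟩⟩⟩, ⟨d, Finset.mem_filter.2 ⟨hd, hcd⟩⟩,
    filter_union_filter_not_eq _ _,
    disjoint_iff_inter_eq_empty.1 (disjoint_filter_filter_not _ _ _), fun b hb e he => ?_⟩
  rw [Finset.mem_filter] at hb he
  obtain ⟨hb, hbc⟩ := hb
  obtain ⟨he, hec⟩ := he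
  simp only [ReadsBefore, not_or, not_and, not_le, not_lt] at hbc hec
  have hce : c.1 < e.1 := by
    refine lt_of_le_of_ne hec.1 fun heq => ?_
    have hlt := hec.2 heq.symm
    exact hleft (by omega) (mem_cells_of_le_of_le he hc ⟨heq.ge, by simp only; omega⟩
      ⟨le_rfl, Nat.sub_le _ _⟩)
  refine ⟨by omega, fun heq => hbelow ?_⟩
  have hbc' : c.2 ≤ b.2 := hbc.elim (snd_le_snd_of_fst_lt_fst hA hb hc) And.right
  exact mem_cells_of_le_of_le hc he ⟨Nat.le_succ _, le_rfl⟩ ⟨hce, by simp only; omega⟩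

open Classical in
/-- The box below `c`, if it belongs to `A`, and the box to the left of `c` otherwise. -/
noncomputable def nextBox (A : SkewShape) (c : ℕ × ℕ) : ℕ × ℕ :=
  if (c.1 + 1, c.2) ∈ A.cells then (c.1 + 1, c.2) else (c.1, c.2 - 1)

theorem filter_readsBefore_nextBox_subset (hA : A.Ribbon) (hc : c ∈ A.cells) :
    {d ∈ A.cells | ReadsBefore d (nextBox A c)} ⊆
      insert (nextBox A c) {d ∈ A.cells | ReadsBefore d c} := by
  intro d hd
  simp only [Finset.mem_filter, Finset.mem_insert] at hd ⊢
  obtain ⟨hd, hdc⟩ := hd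
  simp only [hd, true_and, Prod.ext_iff]
  unfold nextBox at hdc ⊢
  split_ifs at hdc ⊢ with hbelow
  · have := snd_le_snd_of_fst_lt_fst hA hc hd
    have := snd_le_snd_of_fst_lt_fst hA hd hbelow
    simp only [ReadsBefore] at *
    omega
  · simp only [ReadsBefore] at *
    omega

/-- The indices of the boxes from which the path through `A` starting at `c` goes down. -/
def downSteps (A : SkewShape) (c : ℕ × ℕ) : Set ℕ :=
  {k | (((nextBox A)^[k] c).1 + 1, ((nextBox A)^[k] c).2) ∈ A.cells}

theorem ribbonBox_downSteps (A : SkewShape) (c : ℕ × ℕ) (k : ℕ) :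
    ribbonBox (downSteps A c) c k = (nextBox A)^[k] c := by
  induction k with
  | zero => rfl
  | succ k ih =>
    rw [iterate_succ_apply']
    by_cases hk : k ∈ downSteps A c
    · rw [ribbonBox_succ_of_mem hk, ih]
      exact (if_pos hk).symm
    · rw [ribbonBox_succ_of_notMem hk, ih]
      exact (if_neg hk).symm

theorem ribbonBox_downSteps_spec (hA : A.Ribbon) (hc : c ∈ A.cells)
    (hfirst : ∀ d ∈ A.cells, ReadsBefore c d) {k : ℕ} (hk : k < A.size) :
    ribbonBox (downSteps A c) c k ∈ A.cells ∧ height (downSteps A c)ᶜ k ≤ c.2 ∧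
      #{d ∈ A.cells | ReadsBefore d (ribbonBox (downSteps A c) c k)} ≤ k + 1 := by
  induction k with
  | zero =>
    refine ⟨hc, Nat.zero_le _, card_le_one_iff_subset_singleton.2 ⟨c, fun d hd => ?_⟩⟩
    rw [Finset.mem_filter] at hd
    have := hfirst d hd.1
    have := hd.2
    simp only [ReadsBefore, ribbonBox, height_zero] at *
    exact Finset.mem_singleton.2 (Prod.ext (by omega) (by omega))
  | succ k ih =>
    obtain ⟨hmem, hheight, hcard⟩ := ih (by omega)
    obtain ⟨d, hd, hdk⟩ : ∃ d ∈ A.cells, ¬ ReadsBefore d (ribbonBox (downSteps A c) c k) := by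
      by_contra! hall
      rw [Finset.filter_true_of_mem hall] at hcard
      exact hcard.not_gt hk
    have hsucc : ribbonBox (downSteps A c) c (k + 1) =
        nextBox A (ribbonBox (downSteps A c) c k) := by
      simp only [ribbonBox_downSteps, iterate_succ_apply']
    have hcard' := (Finset.card_le_card (filter_readsBefore_nextBox_subset hA hmem)).trans
      ((card_insert_le _ _).trans (Nat.succ_le_succ hcard))
    rw [← hsucc] at hcard'
    by_cases hkS : k ∈ downSteps A c
    · rw [height_succ_of_notMem (S := (downSteps A c)ᶜ) (not_not.2 hkS)]
      refine ⟨?_, hheight, hcard'⟩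
      rw [ribbonBox_succ_of_mem hkS, ribbonBox_downSteps]
      exact hkS
    · have hleft := (below_mem_or_left_mem hA hmem hd hdk).resolve_left
        (ribbonBox_downSteps A c k ▸ hkS)
      rw [height_succ_of_mem (S := (downSteps A c)ᶜ) hkS]
      refine ⟨?_, Nat.lt_of_sub_pos hleft.1, hcard'⟩
      rw [ribbonBox_succ_of_notMem hkS]
      exact hleft.2

theorem exists_isRibbonPath (hA : A.Ribbon) : ∃ S c, IsRibbonPath A A.size S c := by
  obtain ⟨c, hc, hfirst⟩ := exists_first_box hA.1.1
  have hpath := fun k hk => ribbonBox_downSteps_spec (k := k) hA hc hfirst hk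
  refine ⟨downSteps A c, c, (eq_of_subset_of_card_le ?_ ?_).symm, fun k hk => (hpath k hk).2.1⟩
  · exact image_subset_iff.2 fun k hk => (hpath k (Finset.mem_range.1 hk)).1
  · rw [card_image_of_injOn, card_range, SkewShape.size]
    intro k hk m hm heq
    have := (hpath k (Finset.mem_range.1 hk)).2.1
    have := (hpath m (Finset.mem_range.1 hm)).2.1
    have := height_add_height_compl (downSteps A c) k
    have := height_add_height_compl (downSteps A c) m
    simp only [ribbonBox, Prod.mk.injEq] at heq
    omega

end RibbonToPath

section PathToRibbon

variable {A : SkewShape} {N : ℕ} {S : Set ℕ} {c : ℕ × ℕ}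

theorem fst_eq_or_snd_eq_ribbonBox_succ (S : Set ℕ) (c : ℕ × ℕ) (k : ℕ) :
    (ribbonBox S c k).1 = (ribbonBox S c (k + 1)).1 ∨
      (ribbonBox S c k).2 = (ribbonBox S c (k + 1)).2 := by
  by_cases hk : k ∈ S
  · exact Or.inr (congrArg Prod.snd (ribbonBox_succ_of_mem hk)).symm
  · exact Or.inl (congrArg Prod.fst (ribbonBox_succ_of_notMem hk)).symm

theorem IsRibbonPath.not_disconnected (h : IsRibbonPath A N S c) : ¬ A.Disconnected := by
  rintro ⟨B, C, ⟨b, hb⟩, ⟨e, he⟩, hunion, hinter, hapart⟩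
  have hmem : ∀ k < N, ribbonBox S c k ∈ B ∨ ribbonBox S c k ∈ C := fun k hk =>
    Finset.mem_union.1 (hunion ▸ h.ribbonBox_mem hk)
  have hstep : ∀ k, k + 1 < N → (ribbonBox S c (k + 1) ∈ B ↔ ribbonBox S c k ∈ B) := by
    intro k hk
    have hadj := fst_eq_or_snd_eq_ribbonBox_succ S c k
    refine ⟨fun hB => (hmem k (by omega)).resolve_right fun hC => ?_,
      fun hB => (hmem (k + 1) hk).resolve_right fun hC => ?_⟩
    · have := hapart _ hB _ hC
      tauto
    · have := hapart _ hB _ hC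
      tauto
  have hiff : ∀ k < N, (ribbonBox S c k ∈ B ↔ ribbonBox S c 0 ∈ B) := by
    intro k hk
    induction k with
    | zero => rfl
    | succ k ih => rw [hstep k hk, ih (by omega)]
  obtain ⟨k, hk, rfl⟩ := h.mem_cells_iff.1 (hunion ▸ Finset.mem_union_left C hb)
  obtain ⟨m, hm, rfl⟩ := h.mem_cells_iff.1 (hunion ▸ Finset.mem_union_right B he)
  have : ribbonBox S c m ∈ B ∩ C :=
    Finset.mem_inter.2 ⟨(hiff m hm).2 ((hiff k hk).1 hb), he⟩
  simp [hinter] at this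

theorem IsRibbonPath.ribbon (h : IsRibbonPath A N S c) (hN : 0 < N) : A.Ribbon :=
  ⟨⟨⟨_, h.ribbonBox_mem hN⟩, h.not_disconnected⟩, fun _ _ ⟨hd, _, _, he⟩ =>
    Nat.not_succ_le_self _ (h.antitone_snd hd he (Nat.lt_succ_self _))⟩

/-- The Young diagram generated by a set of boxes. -/
def lowerDiagram (s : Finset (ℕ × ℕ)) : YoungDiagram where
  cells := s.biUnion Finset.Iic
  isLowerSet d e hed hd := by
    simp only [coe_biUnion, Set.mem_iUnion, Finset.coe_Iic, Set.mem_Iic] at hd ⊢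
    obtain ⟨x, hx, hdx⟩ := hd
    exact ⟨x, hx, hed.trans hdx⟩

/-- The skew shape formed by the boxes of a Young diagram whose diagonal neighbour to the lower
right is not in the diagram. -/
def rim (μ : YoungDiagram) : SkewShape where
  outer := μ
  inner :=
    { cells := {d ∈ μ.cells | (d.1 + 1, d.2 + 1) ∈ μ.cells}
      isLowerSet := fun d e hed hd => by
        simp only [coe_filter, mem_ofPred_eq] at hd ⊢
        exact ⟨μ.isLowerSet hed hd.1,
          μ.isLowerSet ⟨Nat.succ_le_succ hed.1, Nat.succ_le_succ hed.2⟩ hd.2⟩ }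
  inner_le := Finset.filter_subset _ _

theorem mem_cells_rim_iff {μ : YoungDiagram} {d : ℕ × ℕ} :
    d ∈ (rim μ).cells ↔ d ∈ μ.cells ∧ (d.1 + 1, d.2 + 1) ∉ μ.cells := by
  simp only [SkewShape.cells, rim, Finset.mem_sdiff, Finset.mem_filter]
  tauto

theorem eq_ribbonBox_of_mem_rim {k : ℕ} {d : ℕ × ℕ} (hk : k < N)
    (hd : d ≤ ribbonBox S (0, height Sᶜ (N - 1)) k)
    (hrim : ∀ m < N, ¬ (d.1 + 1, d.2 + 1) ≤ ribbonBox S (0, height Sᶜ (N - 1)) m) :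
    ∃ m < N, ribbonBox S (0, height Sᶜ (N - 1)) m = d := by
  obtain ⟨hd₁, hd₂⟩ := hd
  have hlast := height_add_height_compl S (N - 1)
  have := height_mono S (show k ≤ N - 1 by omega)
  obtain ⟨m, _⟩ : ∃ m, m = d.1 + (height Sᶜ (N - 1) - d.2) := ⟨_, rfl⟩
  simp only [ribbonBox] at hd₁ hd₂
  have hmN : m < N := by omega
  have := hrim m hmN
  have := height_add_height_compl S m
  have := height_mono Sᶜ (show k ≤ N - 1 by omega)
  have := height_mono Sᶜ (show m ≤ N - 1 by omega)
  refine ⟨m, hmN, ?_⟩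
  simp only [ribbonBox, Prod.mk_le_mk, Prod.ext_iff] at *
  rcases Nat.le_total k m with hkm | hkm
  all_goals
    have := height_mono S hkm
    have := height_mono Sᶜ hkm
    omega

theorem isRibbonPath_rim (N : ℕ) (S : Set ℕ) :
    IsRibbonPath (rim (lowerDiagram ((range N).image (ribbonBox S (0, height Sᶜ (N - 1)))))) N S
      (0, height Sᶜ (N - 1)) where
  cells_eq := by
    ext d
    simp only [mem_cells_rim_iff, lowerDiagram, image_biUnion, Finset.mem_biUnion, Finset.mem_range,
      Finset.mem_Iic, Finset.mem_image, not_exists, not_and]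
    refine ⟨fun ⟨⟨k, hk, hd⟩, hrim⟩ => eq_ribbonBox_of_mem_rim hk hd hrim, ?_⟩
    rintro ⟨k, hk, rfl⟩
    refine ⟨⟨k, hk, le_rfl⟩, fun m _ hle => ?_⟩
    simp only [ribbonBox, Prod.mk_le_mk] at hle
    rcases Nat.le_total k m with hkm | hkm
    · have := height_mono Sᶜ hkm
      omega
    · have := height_mono S hkm
      omega
  height_compl_le k hk := height_mono Sᶜ (by omega)

theorem exists_ribbon_isRibbonPath (hN : 0 < N) (S : Set ℕ) :
    ∃ R : SkewShape, ∃ c, R.Ribbon ∧ IsRibbonPath R N S c :=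
  ⟨_, _, (isRibbonPath_rim N S).ribbon hN, isRibbonPath_rim N S⟩

end PathToRibbon

end RibbonLR

/-- If `A` is a ribbon that is not equitable, then there exists an
equitable ribbon `R` of the same size such that `s_R − s_A` is Schur-positive and
`supp A` is strictly contained in `supp R`. -/
theorem exists_equitable_ribbon_above (A : SkewShape)
    (hA : A.Ribbon) (h : ¬ A.Equitable) :
    ∃ R : SkewShape, R.Ribbon ∧ R.Equitable ∧ R.size = A.size ∧
      R.SchurPosDiff A ∧ A.supp ⊂ R.supp := by
  obtain ⟨S, c, hS⟩ := RibbonLR.exists_isRibbonPath hA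
  rw [SkewShape.Equitable, hS.rowEquitable_iff, hS.colEquitable_iff] at h
  obtain ⟨S', hlt, hrow, hcol⟩ := RibbonLR.exists_wordLT_isEquitableSet h
  obtain ⟨R, c', hR, hS'⟩ := RibbonLR.exists_ribbon_isRibbonPath (Finset.card_pos.2 hA.1.1) S'
  exact ⟨R, hR, ⟨hS'.rowEquitable_iff.2 hrow, hS'.colEquitable_iff.2 hcol⟩, hS'.size_eq,
    hlt.1.schurPosDiff hS hS', hlt.supp_ssubset hS hS'⟩
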